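/- arXiv:1006.4393 — 2 statements merged into one kernel-verified Lean document; each statement's English description precedes it below -/
import Mathlib

section
/- Let n ≥ 1 and d ≥ 1 be integers and let b > 0 be an integer. Then there exist uniquely determined integers s and m_s, m_{s+1}, …, m_d, m_{d+1} such that: s ∈ {1, …, d+1}; m_{d+1} ≥ 0; if s ≤ d then n+d−2 ≥ m_d > m_{d−1} > ⋯ > m_s ≥ s; and b = m_{d+1}·C(n−1+d, d) + Σ_{i=s}^{d} C(m_i, i) (where the sum is empty if s = d+1). -/
/-- `IsBinomialExpansion n d b s m` says that the data `(s, m)` constitutes the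
`d`-binomial expansion of `b` relative to `n`:
`b = m_{d+1}·C(n−1+d, d) + Σ_{i=s}^{d} C(m_i, i)` with `1 ≤ s ≤ d+1` and, when
`s ≤ d`, `n+d−2 ≥ m_d > m_{d−1} > ⋯ > m_s ≥ s`. The function `m` is normalized
to vanish at indices outside `{s, …, d+1}`. -/
def IsBinomialExpansion (n d b : ℕ) (s : ℕ) (m : ℕ → ℕ) : Prop :=
  1 ≤ s ∧ s ≤ d + 1 ∧
  (∀ i, i < s → m i = 0) ∧ (∀ i, d + 1 < i → m i = 0) ∧
  (s ≤ d → m d ≤ n + d - 2 ∧ (∀ i, s ≤ i → i < d → m i < m (i + 1)) ∧ s ≤ m s) ∧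
  b = m (d + 1) * Nat.choose (n - 1 + d) d + ∑ i ∈ Finset.Icc s d, Nat.choose (m i) i

/-!
The coefficient `m_{d+1}` and the sum of the remaining terms are the quotient and the remainder of
`b` modulo `C(n-1+d, d)`, because a Macaulay representation `c = Σ_{i=s}^{d} C(m_i, i)` satisfies
`c < C(N, d)` exactly when `m_d < N`. The same equivalence determines the top entry `m_d` from `c`,
so that representations are unique by induction on `d`. They exist for every `c < C(N, d)` by
induction on `N`: by Pascal's rule a number `c < C(N+1, d+1)` is either below `C(N, d+1)`, or
exceeds it by some `c' < C(N, d)`, in which case one puts `m_{d+1} = N` on top of a representation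
of `c'`.
-/

/-- `IsMacaulayRep d c s m` says that `c = Σ_{i=s}^{d} C(m_i, i)` with `m_d > ⋯ > m_s ≥ s ≥ 1` is
the standard Macaulay `d`-binomial representation of `c`. The empty sum, which represents `0`, is
encoded by `s = d + 1`; the function `m` is normalized to vanish below `s` and is arbitrary
above `d`. -/
structure IsMacaulayRep (d c s : ℕ) (m : ℕ → ℕ) : Prop where
  one_le : 1 ≤ s
  le_succ : s ≤ d + 1
  apply_eq_zero : ∀ i < s, m i = 0
  apply_lt_apply_succ : ∀ i, s ≤ i → i < d → m i < m (i + 1)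
  le_apply_start : s ≤ d → s ≤ m s
  sum_eq : ∑ i ∈ Finset.Icc s d, (m i).choose i = c

namespace IsMacaulayRep

variable {d c s : ℕ} {m m' : ℕ → ℕ}

theorem congr (h : IsMacaulayRep d c s m) (hm : ∀ i ≤ d, m' i = m i) :
    IsMacaulayRep d c s m' where
  one_le := h.one_le
  le_succ := h.le_succ
  apply_eq_zero i hi := by
    rw [hm i (Nat.lt_succ_iff.mp (hi.trans_le h.le_succ)), h.apply_eq_zero i hi]
  apply_lt_apply_succ i hsi hid := by
    rw [hm i hid.le, hm (i + 1) hid]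
    exact h.apply_lt_apply_succ i hsi hid
  le_apply_start hs := by
    rw [hm s hs]
    exact h.le_apply_start hs
  sum_eq := by
    rw [← h.sum_eq]
    refine Finset.sum_congr rfl fun i hi => ?_
    rw [hm i (Finset.mem_Icc.mp hi).2]

theorem zero (d : ℕ) : IsMacaulayRep d 0 (d + 1) 0 where
  one_le := by omega
  le_succ := le_rfl
  apply_eq_zero _ _ := rfl
  apply_lt_apply_succ := by omega
  le_apply_start := by omega
  sum_eq := by simp

theorem le_apply (h : IsMacaulayRep d c s m) (hs : s ≤ d) : d ≤ m d := by
  have le_apply_of_le : ∀ i, s ≤ i → i ≤ d → i ≤ m i := by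
    intro i hsi
    induction i, hsi using Nat.le_induction with
    | base => exact h.le_apply_start
    | succ i hsi ih =>
      intro hid
      exact (ih (by omega)).trans_lt (h.apply_lt_apply_succ i hsi hid)
  exact le_apply_of_le d hs le_rfl

theorem choose_le (h : IsMacaulayRep d c s m) (hs : s ≤ d) : (m d).choose d ≤ c := by
  rw [← h.sum_eq]
  exact Finset.single_le_sum (f := fun i => (m i).choose i) (fun _ _ => Nat.zero_le _)
    (Finset.right_mem_Icc.mpr hs)

theorem eq_zero_iff (h : IsMacaulayRep d c s m) : c = 0 ↔ s = d + 1 := by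
  constructor
  · rintro rfl
    by_contra hs
    have hsd : s ≤ d := Nat.lt_succ_iff.mp (h.le_succ.lt_of_ne hs)
    exact (Nat.choose_pos (h.le_apply hsd)).not_ge (h.choose_le hsd)
  · rintro rfl
    simp [← h.sum_eq]

end IsMacaulayRep

theorem isMacaulayRep_succ_iff {d c s : ℕ} {m : ℕ → ℕ} (hs : s ≤ d + 1) :
    IsMacaulayRep (d + 1) c s m ↔
      m d < m (d + 1) ∧ d + 1 ≤ m (d + 1) ∧
        ∃ c', IsMacaulayRep d c' s m ∧ c = c' + (m (d + 1)).choose (d + 1) := by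
  constructor
  · intro h
    have h_top : d + 1 ≤ m (d + 1) := h.le_apply hs
    refine ⟨?_, h_top, _, ⟨h.one_le, hs, h.apply_eq_zero,
      fun i hsi hid => h.apply_lt_apply_succ i hsi (by omega), fun _ => h.le_apply_start hs, rfl⟩,
      by rw [← h.sum_eq, Finset.sum_Icc_succ_top hs]⟩
    rcases hs.eq_or_lt with rfl | hsd
    · rw [h.apply_eq_zero d (by omega)]
      omega
    · exact h.apply_lt_apply_succ d (by omega) (by omega)
  · rintro ⟨h_lt, h_top, c', h, rfl⟩
    refine ⟨h.one_le, by omega, h.apply_eq_zero, fun i hsi hid => ?_, fun _ => ?_,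
      by rw [Finset.sum_Icc_succ_top hs, h.sum_eq]⟩
    · rcases (Nat.lt_succ_iff.mp hid).eq_or_lt with rfl | hid
      · exact h_lt
      · exact h.apply_lt_apply_succ i hsi hid
    · rcases hs.eq_or_lt with rfl | hsd
      · exact h_top
      · exact h.le_apply_start (by omega)

namespace IsMacaulayRep

variable {d c s s' N : ℕ} {m m' : ℕ → ℕ}

theorem lt_choose (h : IsMacaulayRep d c s m) (hdN : d ≤ N) (hm : m d < N) :
    c < N.choose d := by
  induction d generalizing c N with
  | zero =>
    rw [h.eq_zero_iff.mpr (le_antisymm h.le_succ h.one_le)]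
    simp
  | succ d ih =>
    rcases h.le_succ.eq_or_lt with hs | hs
    · rw [h.eq_zero_iff.mpr hs]
      exact Nat.choose_pos hdN
    · obtain ⟨h_lt, h_top, c', h', rfl⟩ := (isMacaulayRep_succ_iff (by omega)).mp h
      calc c' + (m (d + 1)).choose (d + 1)
          < (m (d + 1)).choose d + (m (d + 1)).choose (d + 1) :=
            Nat.add_lt_add_right (ih h' (by omega) h_lt) _
        _ = (m (d + 1) + 1).choose (d + 1) := (Nat.choose_succ_succ _ _).symm
        _ ≤ N.choose (d + 1) := Nat.choose_le_choose _ hm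

theorem lt_choose_iff (h : IsMacaulayRep d c s m) (hN : 0 < N) (hdN : d ≤ N) :
    c < N.choose d ↔ m d < N := by
  refine ⟨fun hc => ?_, h.lt_choose hdN⟩
  rcases h.le_succ.eq_or_lt with rfl | hs
  · rwa [h.apply_eq_zero d (by omega)]
  · by_contra! hm
    exact ((Nat.choose_le_choose d hm).trans (h.choose_le (by omega))).not_gt hc

theorem apply_top_le (h : IsMacaulayRep d c s m) (h' : IsMacaulayRep d c s' m') (hs' : s' ≤ d) :
    m d ≤ m' d := by
  have hd : d ≤ m' d + 1 := (h'.le_apply hs').trans (Nat.le_succ _)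
  have hc : c < (m' d + 1).choose d := h'.lt_choose hd (Nat.lt_succ_self _)
  exact Nat.lt_succ_iff.mp ((h.lt_choose_iff (Nat.succ_pos _) hd).mp hc)

theorem unique (h : IsMacaulayRep d c s m) (h' : IsMacaulayRep d c s' m') :
    s = s' ∧ ∀ i ≤ d, m i = m' i := by
  induction d generalizing c with
  | zero =>
    refine ⟨(le_antisymm h.le_succ h.one_le).trans (le_antisymm h'.one_le h'.le_succ),
      fun i hi => ?_⟩
    rw [h.apply_eq_zero i (hi.trans_lt h.one_le), h'.apply_eq_zero i (hi.trans_lt h'.one_le)]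
  | succ d ih =>
    have h_start : s = d + 2 ↔ s' = d + 2 := h.eq_zero_iff.symm.trans h'.eq_zero_iff
    rcases h.le_succ.eq_or_lt with hs | hs
    · have hs' : s' = d + 2 := h_start.mp hs
      refine ⟨hs.trans hs'.symm, fun i hi => ?_⟩
      rw [h.apply_eq_zero i (by omega), h'.apply_eq_zero i (by omega)]
    · have hs' : s' < d + 2 := h'.le_succ.lt_of_ne (mt h_start.mpr hs.ne)
      have h_top : m (d + 1) = m' (d + 1) :=
        le_antisymm (h.apply_top_le h' (by omega)) (h'.apply_top_le h (by omega))
      obtain ⟨-, -, c₁, h₁, hc₁⟩ := (isMacaulayRep_succ_iff (by omega)).mp h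
      obtain ⟨-, -, c₂, h₂, hc₂⟩ := (isMacaulayRep_succ_iff (by omega)).mp h'
      obtain rfl : c₁ = c₂ := by
        rw [h_top] at hc₁
        omega
      obtain ⟨h_eq, h_below⟩ := ih h₁ h₂
      refine ⟨h_eq, fun i hi => ?_⟩
      rcases hi.eq_or_lt with rfl | hi
      · exact h_top
      · exact h_below i (by omega)

theorem cons {k : ℕ} (h : IsMacaulayRep d c s m) (hm : m d < k) (hd : d + 1 ≤ k) :
    IsMacaulayRep (d + 1) (c + k.choose (d + 1)) s (fun i => if i ≤ d then m i else k) :=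
  (isMacaulayRep_succ_iff h.le_succ).mpr
    ⟨by simpa using hm, by simpa using hd, c, h.congr fun _ hi => if_pos hi, by simp⟩

end IsMacaulayRep

theorem lt_of_one_lt_choose {n k : ℕ} (h : 1 < n.choose k) : k < n := by
  by_contra! hnk
  have h_le := Nat.choose_le_choose k hnk
  rw [Nat.choose_self] at h_le
  omega

theorem exists_isMacaulayRep_of_lt_choose {d c N : ℕ} (hc : c < N.choose d) :
    ∃ s m, IsMacaulayRep d c s m := by
  induction N generalizing d c with
  | zero =>
    obtain rfl : c = 0 := by
      by_contra hc_ne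
      exact Nat.not_lt_zero d (lt_of_one_lt_choose (by omega))
    exact ⟨d + 1, 0, .zero d⟩
  | succ N ih =>
    rcases Nat.eq_zero_or_pos c with rfl | hc_pos
    · exact ⟨d + 1, 0, .zero d⟩
    cases d with
    | zero =>
      rw [Nat.choose_zero_right] at hc
      omega
    | succ d =>
      rcases lt_or_ge c (N.choose (d + 1)) with hcN | hcN
      · exact ih hcN
      obtain ⟨c', rfl⟩ := Nat.exists_eq_add_of_le' hcN
      have hc' : c' < N.choose d := by
        rw [Nat.choose_succ_succ'] at hc
        omega
      have hdN : d + 1 < N + 1 := lt_of_one_lt_choose (by omega)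
      obtain ⟨s, m, h⟩ := ih hc'
      have hm : m d < N := (h.lt_choose_iff (by omega) (by omega)).mp hc'
      exact ⟨s, _, h.cons hm (Nat.lt_succ_iff.mp hdN)⟩

theorem isBinomialExpansion_iff {n d b s : ℕ} {m : ℕ → ℕ} (hn : 1 ≤ n) (hd : 1 ≤ d) :
    IsBinomialExpansion n d b s m ↔
      IsMacaulayRep d (b % (n - 1 + d).choose d) s m ∧
        m (d + 1) = b / (n - 1 + d).choose d ∧ ∀ i, d + 1 < i → m i = 0 := by
  have hC : 0 < (n - 1 + d).choose d := Nat.choose_pos (by omega)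
  constructor
  · rintro ⟨h_one, h_succ, h_below, h_above, h_chain, h_sum⟩
    have h : IsMacaulayRep d (∑ i ∈ Finset.Icc s d, (m i).choose i) s m :=
      ⟨h_one, h_succ, h_below, fun i hsi hid => (h_chain (by omega)).2.1 i hsi hid,
        fun hs => (h_chain hs).2.2, rfl⟩
    have hm : m d < n - 1 + d := by
      rcases h_succ.eq_or_lt with rfl | hs
      · rw [h_below d (by omega)]
        omega
      · have := (h_chain (by omega)).1
        omega
    obtain ⟨h_div, h_mod⟩ := (Nat.div_mod_unique (a := b) (d := m (d + 1)) hC).mpr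
      ⟨by rw [h_sum, mul_comm, add_comm], h.lt_choose (by omega) hm⟩
    exact ⟨h_mod ▸ h, h_div.symm, h_above⟩
  · rintro ⟨h, h_top, h_above⟩
    have hm : m d < n - 1 + d :=
      (h.lt_choose_iff (by omega) (by omega)).mp (Nat.mod_lt b hC)
    refine ⟨h.one_le, h.le_succ, h.apply_eq_zero, h_above,
      fun hs => ⟨by omega, h.apply_lt_apply_succ, h.le_apply_start hs⟩, ?_⟩
    rw [h.sum_eq, h_top, Nat.div_add_mod']

/-- existence and uniqueness of the `d`-binomial expansion of a
positive integer `b` relative to `n`. -/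
theorem binomialExpansion_existsUnique (n d b : ℕ) (hn : 1 ≤ n) (hd : 1 ≤ d) (hb : 0 < b) :
    ∃! sm : ℕ × (ℕ → ℕ), IsBinomialExpansion n d b sm.1 sm.2 := by
  have hC : 0 < (n - 1 + d).choose d := Nat.choose_pos (by omega)
  obtain ⟨s, m₀, h₀⟩ := exists_isMacaulayRep_of_lt_choose (Nat.mod_lt b hC)
  let m : ℕ → ℕ := fun i =>
    if i ≤ d then m₀ i else if i = d + 1 then b / (n - 1 + d).choose d else 0
  have hm : ∀ i ≤ d, m i = m₀ i := fun i hi => if_pos hi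
  have h_top : m (d + 1) = b / (n - 1 + d).choose d := by simp [m]
  have h_above : ∀ i, d + 1 < i → m i = 0 := fun i hi => by
    simp [m, hi.ne', (Nat.lt_of_succ_lt hi).not_ge]
  have h : IsMacaulayRep d (b % (n - 1 + d).choose d) s m := h₀.congr hm
  refine ⟨(s, m), (isBinomialExpansion_iff hn hd).mpr ⟨h, h_top, h_above⟩, ?_⟩
  rintro ⟨s', m'⟩ h_exp
  obtain ⟨h', h_top', h_above'⟩ := (isBinomialExpansion_iff hn hd).mp h_exp
  obtain ⟨rfl, h_eq⟩ := h'.unique h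
  refine Prod.ext rfl (funext fun i => ?_)
  rcases lt_trichotomy i (d + 1) with hi | rfl | hi
  · exact h_eq i (Nat.lt_succ_iff.mp hi)
  · exact h_top'.trans h_top.symm
  · exact (h_above' i hi).trans (h_above i hi).symm
end

section
/- Let K be a field, n ≥ 1, and S = K[x_1,…,x_n] with its standard grading (each x_i of degree 1). For a numerical function h : ℕ → ℕ the following are equivalent: (a) there exists a finitely generated ℕ-graded S-module M = ⊕_{j≥0} M_j (so that S_i · M_j ⊆ M_{i+j} for all i, j) which is generated as an S-module by its degree-zero component M_0 and satisfies dim_K M_j = h(j) for all j ≥ 0; (b) for all integers j ≥ 0, h(j+1) ≤ h(j)^{⟨j⟩}, where the operation b ↦ b^{⟨d⟩} is computed relative to n. -/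
open scoped Classical in
/-- The Macaulay-type operation `b ↦ b^{⟨d⟩}` relative to `n`: if
`b = m_{d+1}·C(n−1+d, d) + Σ_{i=s}^{d} C(m_i, i)` is the `d`-binomial expansion
of `b > 0`, then `b^{⟨d⟩} = m_{d+1}·C(n+d, d+1) + Σ_{i=s}^{d} C(m_i+1, i+1)`;
moreover `0^{⟨d⟩} = 0` and `b^{⟨0⟩} = n·b`. -/
noncomputable def macaulayPow (n d b : ℕ) : ℕ :=
  if b = 0 then 0
  else if d = 0 then n * b
  else if h : ∃ sm : ℕ × (ℕ → ℕ), IsBinomialExpansion n d b sm.1 sm.2 then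
    h.choose.2 (d + 1) * Nat.choose (n + d) (d + 1) +
      ∑ i ∈ Finset.Icc h.choose.1 d, Nat.choose (h.choose.2 i + 1) (i + 1)
  else 0

/-!
Order the monomials `x^u e_c` of a free module `S^r` by component, `e_0 < e_1 < ⋯`, and then
lexicographically with `x_0 > x_1 > ⋯`.

Necessity. Write `M` as a quotient of `S^r`. In each degree the monomials whose image is not a
linear combination of the images of smaller ones form a basis, and these standard monomials are
closed under division by variables. It remains to bound, by `|A|^{⟨d⟩}`, the size of a set `A'` of
monomials of degree `d + 1` all of whose quotients by variables lie in `A`. Compression along pairs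
of consecutive variables makes `A'` stable. Then, as in Green's proof of Macaulay's theorem, `A'`
has at least as many monomials divisible by the last variable as the initial segment `L'` of the
same size. Hence dividing these members of `L'` by the last variable lands in the initial segment
of size `|A|`, and `|L'|` is at most the growth of that segment. The binomial expansion of `|A|`
describes how the segment decomposes, and yields its growth `|A|^{⟨d⟩}`.

Sufficiency. Choose in degree `j` the initial segment of size `h j`. The growth condition says
exactly that their union is closed under division by variables, so it is a monomial basis of a
graded quotient of `S^{h 0}`.
-/

section FinsetNat

theorem sum_range_card_lt_sum {W : Finset ℕ} (hW : W ≠ Finset.range W.card) :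
    ∑ a ∈ Finset.range W.card, a < ∑ a ∈ W, a := by
  set R := Finset.range W.card
  have hcard : (R \ W).card = (W \ R).card :=
    Finset.card_sdiff_comm (Finset.card_range _)
  have hne : (R \ W).Nonempty := by
    rw [Finset.sdiff_nonempty]
    exact fun hsub => hW (Finset.eq_of_subset_of_card_le hsub (Finset.card_range _).ge).symm
  have hlt : ∑ a ∈ R \ W, a < ∑ a ∈ W \ R, a :=
    calc ∑ a ∈ R \ W, a < ∑ _a ∈ R \ W, W.card :=
          Finset.sum_lt_sum_of_nonempty hne fun a ha =>
            Finset.mem_range.1 (Finset.mem_sdiff.1 ha).1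
      _ = ∑ _a ∈ W \ R, W.card := by rw [Finset.sum_const, Finset.sum_const, hcard]
      _ ≤ ∑ a ∈ W \ R, a := Finset.sum_le_sum fun a ha =>
          not_lt.1 (mt Finset.mem_range.2 (Finset.mem_sdiff.1 ha).2)
  have hsplitR := Finset.sum_inter_add_sum_sdiff R W id
  have hsplitW := Finset.sum_inter_add_sum_sdiff W R id
  rw [Finset.inter_comm] at hsplitW
  simp only [id] at hsplitR hsplitW
  omega

theorem sum_range_card_le_sum (W : Finset ℕ) : ∑ a ∈ Finset.range W.card, a ≤ ∑ a ∈ W, a := by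
  by_cases hW : W = Finset.range W.card
  · rw [← hW]
  · exact (sum_range_card_lt_sum hW).le

-- `W'` and `W` record exponents of standard monomials in two variables of degrees `t + 1` and `t`:
-- unless `W` is everything, deleting a gap of `W` maps `W'` injectively into `W`.
theorem card_le_or_card_eq_of_pred_mem {t : ℕ} {W' W : Finset ℕ} (hW : ∀ a ∈ W, a ≤ t)
    (hself : ∀ a ∈ W', a ≤ t → a ∈ W) (hpred : ∀ a, a + 1 ∈ W' → a ∈ W) :
    W'.card ≤ W.card ∨ W.card = t + 1 := by
  by_cases hfull : ∀ a ≤ t, a ∈ W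
  · right
    have hrange : W = Finset.range (t + 1) := by
      ext a
      rw [Finset.mem_range_succ_iff]
      exact ⟨hW a, hfull a⟩
    rw [hrange, Finset.card_range]
  · left
    push Not at hfull
    obtain ⟨gap, hgap, hgapW⟩ := hfull
    have hne : ∀ a ∈ W', a ≠ gap ∧ a ≠ gap + 1 := fun a ha =>
      ⟨fun h => hgapW (hself gap (h ▸ ha) hgap), fun h => hgapW (hpred gap (h ▸ ha))⟩
    apply Finset.card_le_card_of_injOn fun a => if a < gap then a else a - 1
    · intro a ha
      have hage := hne a ha
      dsimp only
      split_ifs with hlt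
      · exact hself a ha (by omega)
      · exact hpred (a - 1) ((show a - 1 + 1 = a by omega) ▸ ha)
    · intro a ha b hb hab
      have hage := hne a ha
      have hbge := hne b hb
      dsimp only at hab
      split_ifs at hab <;> omega

end FinsetNat

section InitialSegment

variable {α : Type*} [LinearOrder α]

/-- `Y` is an initial segment of `Z`: a finite subset of `Z` that contains every element of `Z`
below one of its members. The ambient set may be infinite. -/
def IsInitialSegment (Z : Set α) (Y : Finset α) : Prop :=
  ↑Y ⊆ Z ∧ ∀ y ∈ Y, ∀ x ∈ Z, x < y → x ∈ Y

theorem IsInitialSegment.mem_of_le {Z : Set α} {Y : Finset α} (hY : IsInitialSegment Z Y)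
    {x y : α} (hy : y ∈ Y) (hx : x ∈ Z) (hxy : x ≤ y) : x ∈ Y := by
  rcases hxy.eq_or_lt with rfl | hlt
  · exact hy
  · exact hY.2 y hy x hx hlt

theorem IsInitialSegment.subset_of_card_le {Z : Set α} {Y Y' : Finset α}
    (hY : IsInitialSegment Z Y) (hY' : IsInitialSegment Z Y') (hcard : Y.card ≤ Y'.card) :
    Y ⊆ Y' := by
  intro y hy
  by_contra hy'
  have hsub : Y' ⊆ Y := fun z hz => hY.mem_of_le hy (hY'.1 hz) <|
    le_of_not_gt fun hlt => hy' (hY'.2 z hz y (hY.1 hy) hlt)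
  exact hy' (Finset.eq_of_subset_of_card_le hsub hcard ▸ hy)

theorem IsInitialSegment.eq_of_card_eq {Z : Set α} {Y Y' : Finset α}
    (hY : IsInitialSegment Z Y) (hY' : IsInitialSegment Z Y') (hcard : Y.card = Y'.card) :
    Y = Y' :=
  (hY.subset_of_card_le hY' hcard.le).antisymm (hY'.subset_of_card_le hY hcard.ge)

theorem IsInitialSegment.trans {Z Z' : Set α} {Y Y' : Finset α}
    (hY : IsInitialSegment Z' Y) (hY' : IsInitialSegment Z Y') (hZ' : ↑Y' = Z') :
    IsInitialSegment Z Y := by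
  subst hZ'
  exact ⟨hY.1.trans hY'.1, fun y hy x hx hxy => hY.2 y hy x (hY'.2 y (hY.1 hy) x hx hxy) hxy⟩

theorem exists_isInitialSegment_card_eq (Z : Finset α) :
    ∀ b ≤ Z.card, ∃ Y, IsInitialSegment (Z : Set α) Y ∧ Y.card = b := by
  induction Z using Finset.induction_on_max with
  | empty => exact fun b hb => ⟨∅, by simp [IsInitialSegment], (Nat.le_zero.1 hb).symm⟩
  | insert a s ha ih =>
    intro b hb
    rcases hb.eq_or_lt with rfl | hlt
    · exact ⟨insert a s, ⟨subset_rfl, fun _ _ x hx _ => hx⟩, rfl⟩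
    · rw [Finset.card_insert_of_notMem fun h => lt_irrefl _ (ha a h)] at hlt
      obtain ⟨Y, hY, hcard⟩ := ih b (Nat.le_of_lt_succ hlt)
      refine ⟨Y, ⟨hY.1.trans (Finset.coe_subset.2 (Finset.subset_insert _ _)), ?_⟩, hcard⟩
      intro y hy x hx hxy
      rcases Finset.mem_insert.1 hx with rfl | hx
      · exact absurd hxy (lt_asymm (ha y (hY.1 hy)))
      · exact hY.2 y hy x hx hxy

end InitialSegment

/-- The monomial `x^exponent` times the basis vector number `component` of a free module. Variables
and components are indexed by all of `ℕ`; how many are in play is decided by the sets of monomials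
considered. -/
@[ext] structure ModuleMonomial where
  component : ℕ
  exponent : ℕ →₀ ℕ

namespace ModuleMonomial

theorem toLex_component_exponent_injective : Function.Injective fun p : ModuleMonomial =>
    (toLex (p.component, toLex p.exponent) : ℕ ×ₗ Lex (ℕ →₀ ℕ)) := fun _ _ h =>
  ModuleMonomial.ext (congrArg (fun x => (ofLex x).1) h)
    (congrArg (fun x : ℕ ×ₗ Lex (ℕ →₀ ℕ) => ofLex (ofLex x).2) h)

/-- Monomials are compared by component first, then lexicographically with `x₀ > x₁ > ⋯`. -/
noncomputable instance : LinearOrder ModuleMonomial :=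
  LinearOrder.lift' _ toLex_component_exponent_injective

theorem lt_iff {p q : ModuleMonomial} : p < q ↔ p.component < q.component ∨
    p.component = q.component ∧
      ∃ i, (∀ j < i, p.exponent j = q.exponent j) ∧ p.exponent i < q.exponent i :=
  Prod.Lex.toLex_lt_toLex

/-- Multiplication by the variable `x_i`. -/
noncomputable def mulVar (i : ℕ) (p : ModuleMonomial) : ModuleMonomial :=
  ⟨p.component, p.exponent + Finsupp.single i 1⟩

@[simp] theorem component_mulVar (i : ℕ) (p : ModuleMonomial) :
    (mulVar i p).component = p.component := rfl

theorem exponent_mulVar (i : ℕ) (p : ModuleMonomial) :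
    (mulVar i p).exponent = p.exponent + Finsupp.single i 1 := rfl

@[simp] theorem exponent_mulVar_apply (i j : ℕ) (p : ModuleMonomial) :
    (mulVar i p).exponent j = p.exponent j + if i = j then 1 else 0 := by
  simp [exponent_mulVar, Finsupp.single_apply]

@[simp] theorem degree_exponent_mulVar (i : ℕ) (p : ModuleMonomial) :
    (mulVar i p).exponent.degree = p.exponent.degree + 1 := by
  simp [exponent_mulVar]

theorem mulVar_injective (i : ℕ) : Function.Injective (mulVar i) := by
  intro p q h
  rw [ModuleMonomial.ext_iff] at h ⊢
  exact ⟨h.1, add_right_cancel h.2⟩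

theorem mulVar_comm (i j : ℕ) (p : ModuleMonomial) :
    mulVar i (mulVar j p) = mulVar j (mulVar i p) :=
  ModuleMonomial.ext rfl (add_right_comm _ _ _)

theorem exists_eq_mulVar {i : ℕ} {p : ModuleMonomial} (hp : p.exponent i ≠ 0) :
    ∃ q, p = mulVar i q :=
  ⟨⟨p.component, p.exponent - Finsupp.single i 1⟩, ModuleMonomial.ext rfl <|
    (tsub_add_cancel_of_le (Finsupp.single_le_iff.2 (Nat.one_le_iff_ne_zero.2 hp))).symm⟩

theorem mulVar_strictMono (i : ℕ) : StrictMono (mulVar i) := by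
  intro p q h
  simpa [lt_iff] using lt_iff.1 h

theorem mulVar_le_mulVar_left {i j : ℕ} (hij : i ≤ j) (p : ModuleMonomial) :
    mulVar j p ≤ mulVar i p := by
  rcases hij.eq_or_lt with rfl | hlt
  · exact le_rfl
  · refine le_of_lt (lt_iff.2 <| Or.inr ⟨rfl, i, fun l hl => ?_, ?_⟩)
    · simp [hl.ne', (hl.trans hlt).ne']
    · simp [hlt.ne']

/-- `p` involves no variable beyond `x_j`. -/
def VarsLE (p : ModuleMonomial) (j : ℕ) : Prop := ∀ i, j < i → p.exponent i = 0

theorem mulVar_le_mulVar_of_lt {w v : ModuleMonomial} {j : ℕ} (hw : w.VarsLE j)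
    (hdeg : w.exponent.degree = v.exponent.degree) (hwv : w < v) (m : ℕ) :
    mulVar j w ≤ mulVar m v := by
  rw [lt_iff] at hwv
  refine le_of_lt (lt_iff.2 ?_)
  obtain hlt | ⟨hcomp, i, heq, hlt⟩ := hwv
  · exact Or.inl hlt
  have hij : i < j := by
    by_contra! hji
    have hle : w.exponent ≤ v.exponent := fun l => by
      rcases lt_trichotomy l i with hl | rfl | hl
      · exact (heq l hl).le
      · exact hlt.le
      · exact (hw l (hji.trans_lt hl)).trans_le (Nat.zero_le _)
    have hsub : (v.exponent - w.exponent).degree = 0 := by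
      have := congrArg Finsupp.degree (tsub_add_cancel_of_le hle)
      rw [map_add] at this
      omega
    have := DFunLike.congr_fun ((Finsupp.degree_eq_zero_iff _).1 hsub) i
    rw [Finsupp.tsub_apply, Finsupp.zero_apply] at this
    omega
  refine Or.inr ⟨hcomp, ?_⟩
  rcases lt_or_ge m i with hm | hm
  · refine ⟨m, fun l hl => ?_, ?_⟩
    · simp [heq l (hl.trans hm), hl.ne', (hl.trans (hm.trans hij)).ne']
    · simp [heq m hm, (hm.trans hij).ne']
  · refine ⟨i, fun l hl => ?_, ?_⟩
    · simp [heq l hl, (hl.trans hij).ne', (hl.trans_le hm).ne']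
    · simp only [exponent_mulVar_apply, hij.ne', if_false]
      omega

theorem exists_eq_mulVar_of_degree_ne_zero {u : ModuleMonomial} (hu : u.exponent.degree ≠ 0) :
    ∃ j w, u = mulVar j w ∧ w.VarsLE j := by
  have hne : u.exponent.support.Nonempty := by
    rw [Finsupp.support_nonempty_iff]
    rintro h0
    simp [h0] at hu
  have hmem := u.exponent.support.max'_mem hne
  set j := u.exponent.support.max' hne
  obtain ⟨w, hw⟩ := exists_eq_mulVar (Finsupp.mem_support_iff.1 hmem)
  refine ⟨j, w, hw, fun i hi => ?_⟩
  have hui : u.exponent i = 0 := Finsupp.notMem_support_iff.1 fun h =>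
    hi.not_ge (u.exponent.support.le_max' i h)
  simpa [hw, hi.ne] using hui

/-- The monomials of degree `d` in the variables `x_i`, `i ∈ S`, in all components. -/
def degreePart (S : Finset ℕ) (d : ℕ) : Set ModuleMonomial :=
  {p | (∀ i ∉ S, p.exponent i = 0) ∧ p.exponent.degree = d}

theorem mulVar_mem_degreePart {S : Finset ℕ} {d i : ℕ} {p : ModuleMonomial} :
    mulVar i p ∈ degreePart S (d + 1) ↔ i ∈ S ∧ p ∈ degreePart S d := by
  simp only [degreePart, Set.mem_ofPred_eq, exponent_mulVar_apply, degree_exponent_mulVar,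
    add_left_inj, ← and_assoc, and_congr_left_iff, Nat.add_eq_zero_iff]
  refine fun _ => ⟨fun h => ⟨?_, fun j hj => (h j hj).1⟩, fun h j hj => ⟨h.2 j hj, ?_⟩⟩
  · by_contra hi
    simpa using (h i hi).2
  · exact if_neg fun hij : i = j => hj (hij ▸ h.1)

theorem mem_degreePart_range_iff {k d : ℕ} {p : ModuleMonomial} :
    p ∈ degreePart (Finset.range k) d ↔
      p ∈ degreePart (Finset.range (k + 1)) d ∧ p.exponent k = 0 := by
  simp only [degreePart, Set.mem_ofPred_eq, Finset.mem_range, not_lt, Nat.succ_le_iff]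
  refine ⟨fun h => ⟨⟨fun i hi => h.1 i hi.le, h.2⟩, h.1 k le_rfl⟩, fun h => ⟨fun i hi => ?_, h.1.2⟩⟩
  rcases hi.eq_or_lt with rfl | hlt
  · exact h.2
  · exact h.1.1 i hlt

/-- The monomials of degree `d` in the variables `x_i`, `i ∈ S`, in the components `c ∈ C`. -/
noncomputable def monomials (C S : Finset ℕ) (d : ℕ) : Finset ModuleMonomial :=
  (C ×ˢ S.finsuppAntidiag d).map
    ⟨fun x => ⟨x.1, x.2⟩, fun _ _ h => Prod.ext (congrArg component h) (congrArg exponent h)⟩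

theorem mem_monomials {C S : Finset ℕ} {d : ℕ} {p : ModuleMonomial} :
    p ∈ monomials C S d ↔ p.component ∈ C ∧ p ∈ degreePart S d := by
  have hsupp (e : ℕ →₀ ℕ) : e.support ⊆ S ↔ ∀ i ∉ S, e i = 0 := by
    simp only [Finset.subset_iff, Finsupp.mem_support_iff, not_imp_comm]
  simp only [monomials, Finset.mem_map, Finset.mem_product, Finset.mem_finsuppAntidiag', hsupp,
    Prod.exists, degreePart, Set.mem_ofPred_eq]
  constructor
  · rintro ⟨c, e, ⟨hc, hdeg, he⟩, rfl⟩
    exact ⟨hc, he, hdeg⟩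
  · rintro ⟨hc, he, hdeg⟩
    exact ⟨p.component, p.exponent, ⟨hc, hdeg, he⟩, rfl⟩

theorem coe_monomials_subset_degreePart (C S : Finset ℕ) (d : ℕ) :
    ↑(monomials C S d) ⊆ degreePart S d :=
  fun _ hp => (mem_monomials.1 hp).2

theorem card_monomials (C S : Finset ℕ) (d : ℕ) :
    (monomials C S d).card = C.card * Nat.multichoose S.card d := by
  rw [monomials, Finset.card_map, Finset.card_product,
    Finset.card_finsuppAntidiag_nat_eq_multichoose]

theorem isInitialSegment_monomials_range (r : ℕ) (S : Finset ℕ) (d : ℕ) :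
    IsInitialSegment (degreePart S d) (monomials (Finset.range r) S d) := by
  refine ⟨coe_monomials_subset_degreePart _ _ _, fun y hy x hx hxy => mem_monomials.2 ⟨?_, hx⟩⟩
  have hy := Finset.mem_range.1 (mem_monomials.1 hy).1
  rcases lt_iff.1 hxy with h | h <;> rw [Finset.mem_range] <;> omega

theorem exists_isInitialSegment_degreePart {n : ℕ} (hn : 1 ≤ n) (d b : ℕ) :
    ∃ Y, IsInitialSegment (degreePart (Finset.range n) d) Y ∧ Y.card = b := by
  have hb : b ≤ (monomials (Finset.range b) (Finset.range n) d).card := by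
    rw [card_monomials, Finset.card_range, Finset.card_range, Nat.multichoose_eq]
    exact Nat.le_mul_of_pos_right b (Nat.choose_pos (by omega))
  obtain ⟨Y, hY, hcard⟩ := exists_isInitialSegment_card_eq _ b hb
  exact ⟨Y, hY.trans (isInitialSegment_monomials_range b _ d) rfl, hcard⟩

section Green

/-- The monomials of `A` not divisible by `x_k`: what survives of `A` modulo `x_k`. -/
noncomputable def withoutVar (k : ℕ) (A : Finset ModuleMonomial) : Finset ModuleMonomial :=
  A.filter fun p => p.exponent k = 0

/-- The quotients by `x_k` of the monomials of `A` divisible by `x_k`. -/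
noncomputable def divVar (k : ℕ) (A : Finset ModuleMonomial) : Finset ModuleMonomial :=
  A.preimage (mulVar k) (mulVar_injective k).injOn

theorem mem_withoutVar {k : ℕ} {A : Finset ModuleMonomial} {p : ModuleMonomial} :
    p ∈ withoutVar k A ↔ p ∈ A ∧ p.exponent k = 0 :=
  Finset.mem_filter

theorem mem_divVar {k : ℕ} {A : Finset ModuleMonomial} {p : ModuleMonomial} :
    p ∈ divVar k A ↔ mulVar k p ∈ A :=
  Finset.mem_preimage

theorem card_withoutVar_add_card_divVar (k : ℕ) (A : Finset ModuleMonomial) :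
    (withoutVar k A).card + (divVar k A).card = A.card := by
  have himage : (divVar k A).map ⟨mulVar k, mulVar_injective k⟩ =
      A.filter fun p => ¬ p.exponent k = 0 := by
    ext p
    simp only [Finset.mem_map, mem_divVar, Function.Embedding.coeFn_mk, Finset.mem_filter]
    constructor
    · rintro ⟨q, hq, rfl⟩
      exact ⟨hq, by simp⟩
    · rintro ⟨hp, hk⟩
      obtain ⟨q, rfl⟩ := exists_eq_mulVar hk
      exact ⟨q, hp, rfl⟩
  rw [← Finset.card_map (s := divVar k A) ⟨mulVar k, mulVar_injective k⟩, himage]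
  exact Finset.card_filter_add_card_filter_not _

theorem withoutVar_subset_degreePart {k d : ℕ} {A : Finset ModuleMonomial}
    (hA : ↑A ⊆ degreePart (Finset.range (k + 1)) d) :
    ↑(withoutVar k A) ⊆ degreePart (Finset.range k) d := fun _ hp =>
  mem_degreePart_range_iff.2 ⟨hA (mem_withoutVar.1 hp).1, (mem_withoutVar.1 hp).2⟩

theorem divVar_subset_degreePart {S : Finset ℕ} {k d : ℕ} {A : Finset ModuleMonomial}
    (hA : ↑A ⊆ degreePart S (d + 1)) : ↑(divVar k A) ⊆ degreePart S d := fun _ hp =>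
  (mulVar_mem_degreePart.1 (hA (mem_divVar.1 hp))).2

theorem withoutVar_eq_self_of_subset_degreePart_zero {S : Finset ℕ} {A : Finset ModuleMonomial}
    (hA : ↑A ⊆ degreePart S 0) (k : ℕ) : withoutVar k A = A :=
  Finset.filter_true_of_mem fun _ hp =>
    DFunLike.congr_fun ((Finsupp.degree_eq_zero_iff _).1 (hA hp).2) k

theorem withoutVar_zero_eq_empty {d : ℕ} {A : Finset ModuleMonomial}
    (hA : ↑A ⊆ degreePart (Finset.range 1) (d + 1)) : withoutVar 0 A = ∅ := by
  refine Finset.eq_empty_of_forall_notMem fun p hp => ?_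
  obtain ⟨hvanish, hdeg⟩ := withoutVar_subset_degreePart hA hp
  have hzero : p.exponent = 0 := Finsupp.ext fun i => hvanish i (by simp)
  simp [hzero] at hdeg

theorem _root_.IsInitialSegment.withoutVar {k d : ℕ} {L : Finset ModuleMonomial}
    (hL : IsInitialSegment (degreePart (Finset.range (k + 1)) d) L) :
    IsInitialSegment (degreePart (Finset.range k) d) (withoutVar k L) := by
  refine ⟨withoutVar_subset_degreePart hL.1, fun y hy x hx hxy => mem_withoutVar.2 ?_⟩
  have hx := mem_degreePart_range_iff.1 hx
  exact ⟨hL.2 y (mem_withoutVar.1 hy).1 x hx.1 hxy, hx.2⟩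

theorem _root_.IsInitialSegment.divVar {S : Finset ℕ} {k d : ℕ} (hk : k ∈ S)
    {L : Finset ModuleMonomial} (hL : IsInitialSegment (degreePart S (d + 1)) L) :
    IsInitialSegment (degreePart S d) (divVar k L) :=
  ⟨divVar_subset_degreePart hL.1, fun _ hy _ hx hxy => mem_divVar.2 <|
    hL.2 _ (mem_divVar.1 hy) _ (mulVar_mem_degreePart.2 ⟨hk, hx⟩) (mulVar_strictMono k hxy)⟩

theorem _root_.IsInitialSegment.divVar_subset {S : Finset ℕ} {j k d : ℕ}
    {L D : Finset ModuleMonomial} (hL : IsInitialSegment (degreePart S (d + 1)) L)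
    (hD : IsInitialSegment (degreePart S d) D)
    {w : ModuleMonomial} (hwj : w.VarsLE j) (hj : j ∈ S) (hwD : w ∈ D) (hwL : mulVar j w ∉ L) :
    ModuleMonomial.divVar k L ⊆ D := by
  intro v hv
  have hvS := divVar_subset_degreePart hL.1 hv
  refine hD.mem_of_le hwD hvS <| le_of_not_gt fun hwv => hwL ?_
  exact hL.mem_of_le (mem_divVar.1 hv) (mulVar_mem_degreePart.2 ⟨hj, hD.1 hwD⟩)
    (mulVar_le_mulVar_of_lt hwj ((hD.1 hwD).2.trans hvS.2.symm) hwv k)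

/-- `A` is closed under trading a factor `x_i` for `x_{i+1}`, `i + 1 < n`. In terms
of the monomials outside `A` this is strong stability. -/
def IsStable (n : ℕ) (A : Finset ModuleMonomial) : Prop :=
  ∀ i, i + 1 < n → ∀ q, mulVar i q ∈ A → mulVar (i + 1) q ∈ A

theorem IsStable.withoutVar {k : ℕ} {A : Finset ModuleMonomial} (hA : IsStable (k + 1) A) :
    IsStable k (withoutVar k A) := by
  intro i hi q hq
  obtain ⟨hqA, hqk⟩ := mem_withoutVar.1 hq
  refine mem_withoutVar.2 ⟨hA i (by omega) q hqA, ?_⟩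
  rw [exponent_mulVar_apply] at hqk ⊢
  rw [if_neg hi.ne]
  omega

theorem IsStable.divVar {n k : ℕ} {A : Finset ModuleMonomial} (hA : IsStable n A) :
    IsStable n (divVar k A) := by
  intro i hi q hq
  rw [mem_divVar, mulVar_comm] at hq ⊢
  exact hA i hi _ hq

theorem IsStable.divVar_withoutVar_subset {k : ℕ} {A : Finset ModuleMonomial}
    (hA : IsStable (k + 2) A) :
    ModuleMonomial.divVar k (ModuleMonomial.withoutVar (k + 1) A) ⊆
      ModuleMonomial.withoutVar (k + 1) (ModuleMonomial.divVar (k + 1) A) := by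
  intro p hp
  obtain ⟨hpA, hpk⟩ := mem_withoutVar.1 (mem_divVar.1 hp)
  refine mem_withoutVar.2 ⟨mem_divVar.2 (hA k (by omega) p hpA), ?_⟩
  simpa using hpk

/-- Green's restriction bound in degree `d` for the variables `x_0, …, x_k`: among the stable sets
of monomials of a given size, the initial segment keeps the most monomials modulo `x_k`. -/
def GreenBound (k d : ℕ) : Prop :=
  ∀ A L : Finset ModuleMonomial, ↑A ⊆ degreePart (Finset.range (k + 1)) d → IsStable (k + 1) A →
    IsInitialSegment (degreePart (Finset.range (k + 1)) d) L → L.card = A.card →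
    (withoutVar k A).card ≤ (withoutVar k L).card

theorem greenBound_degree_zero (k : ℕ) : GreenBound k 0 := by
  intro A L _ _ hL hcard
  rw [withoutVar_eq_self_of_subset_degreePart_zero hL.1, hcard]
  exact Finset.card_filter_le _ _

theorem IsStable.divVar_subset_withoutVar {k d : ℕ} (hk : GreenBound k (d + 1))
    (hd : GreenBound (k + 1) d) {A C D : Finset ModuleMonomial}
    (hA : ↑A ⊆ degreePart (Finset.range (k + 2)) (d + 1)) (hstable : IsStable (k + 2) A)
    (hC : IsInitialSegment (degreePart (Finset.range (k + 1)) (d + 1)) C)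
    (hCcard : C.card = (ModuleMonomial.withoutVar (k + 1) A).card)
    (hD : IsInitialSegment (degreePart (Finset.range (k + 2)) d) D)
    (hDcard : D.card = (ModuleMonomial.divVar (k + 1) A).card) :
    ModuleMonomial.divVar k C ⊆ ModuleMonomial.withoutVar (k + 1) D := by
  refine (hC.divVar (Finset.self_mem_range_succ k)).subset_of_card_le hD.withoutVar ?_
  have hgreenC := hk _ C (withoutVar_subset_degreePart hA) hstable.withoutVar hC hCcard
  have hgreenD := hd _ D (divVar_subset_degreePart hA) hstable.divVar hD hDcard
  have hsplitA := card_withoutVar_add_card_divVar k (ModuleMonomial.withoutVar (k + 1) A)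
  have hsplitC := card_withoutVar_add_card_divVar k C
  have hsub := Finset.card_le_card hstable.divVar_withoutVar_subset
  omega

theorem greenBound_succ_succ {k d : ℕ} (hk : GreenBound k (d + 1)) (hd : GreenBound (k + 1) d) :
    GreenBound (k + 1) (d + 1) := by
  intro A L hA hstable hL hcard
  by_contra! hlt
  obtain ⟨C, hC, hCcard⟩ := exists_isInitialSegment_degreePart (Nat.le_add_left 1 k) (d + 1)
    (withoutVar (k + 1) A).card
  obtain ⟨D, hD, hDcard⟩ := exists_isInitialSegment_degreePart (Nat.le_add_left 1 (k + 1)) d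
    (divVar (k + 1) A).card
  obtain ⟨u, huC, huL⟩ := Finset.exists_mem_notMem_of_card_lt_card (hCcard ▸ hlt)
  have hu := hC.1 huC
  obtain ⟨j, w, rfl, hwj⟩ := exists_eq_mulVar_of_degree_ne_zero (hu.2.trans_ne d.succ_ne_zero)
  have ⟨hj, hw⟩ := mulVar_mem_degreePart.1 hu
  have hwD : w ∈ D := by
    have hwC : w ∈ divVar k C := mem_divVar.2 <|
      hC.mem_of_le huC (mulVar_mem_degreePart.2 ⟨Finset.self_mem_range_succ k, hw⟩)
        (mulVar_le_mulVar_left (Finset.mem_range_succ_iff.1 hj) w)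
    exact (mem_withoutVar.1
      (hstable.divVar_subset_withoutVar hk hd hA hC hCcard hD hDcard hwC)).1
  have hu' := mem_degreePart_range_iff.1 hu
  have hquot : divVar (k + 1) L ⊆ D :=
    hL.divVar_subset hD hwj (Finset.range_subset_range.2 k.succ.le_succ hj) hwD
      fun h => huL (mem_withoutVar.2 ⟨h, hu'.2⟩)
  have hquotcard := Finset.card_le_card hquot
  have hsplitA := card_withoutVar_add_card_divVar (k + 1) A
  have hsplitL := card_withoutVar_add_card_divVar (k + 1) L
  omega

theorem greenBound (k d : ℕ) : GreenBound k d := by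
  induction k generalizing d with
  | zero =>
    cases d with
    | zero => exact greenBound_degree_zero 0
    | succ d =>
      intro A L hA _ _ _
      simp [withoutVar_zero_eq_empty hA]
  | succ k ihk =>
    induction d with
    | zero => exact greenBound_degree_zero (k + 1)
    | succ d ihd => exact greenBound_succ_succ (ihk (d + 1)) ihd

end Green

section Compression

/-- The sum of the exponents of `x_i` and `x_{i+1}`. -/
def pairDegree (i : ℕ) (p : ModuleMonomial) : ℕ := p.exponent i + p.exponent (i + 1)

/-- Give `x_i` the exponent `a` and adjust that of `x_{i+1}` so as to keep the degree; meaningful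
only for `a ≤ pairDegree i p`, because the subtraction is truncated. -/
noncomputable def redistribute (i : ℕ) (p : ModuleMonomial) (a : ℕ) : ModuleMonomial :=
  ⟨p.component, (p.exponent.erase i).erase (i + 1) + Finsupp.single i a +
    Finsupp.single (i + 1) (pairDegree i p - a)⟩

theorem exponent_redistribute_apply (i : ℕ) (p : ModuleMonomial) (a l : ℕ) :
    (redistribute i p a).exponent l =
      if l = i + 1 then pairDegree i p - a else if l = i then a else p.exponent l := by
  simp only [redistribute, Finsupp.add_apply, Finsupp.erase_apply, Finsupp.single_apply]
  split_ifs <;> omega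

theorem exponent_redistribute_self (i : ℕ) (p : ModuleMonomial) (a : ℕ) :
    (redistribute i p a).exponent i = a := by
  simp [exponent_redistribute_apply]

theorem exponent_le_pairDegree (i : ℕ) (p : ModuleMonomial) : p.exponent i ≤ pairDegree i p :=
  Nat.le_add_right _ _

theorem redistribute_self (i : ℕ) (p : ModuleMonomial) : redistribute i p (p.exponent i) = p := by
  ext l
  · rfl
  · rw [exponent_redistribute_apply, pairDegree]
    split_ifs with h₁ h₂
    · rw [h₁, Nat.add_sub_cancel_left]
    · rw [h₂]
    · rfl

theorem pairDegree_redistribute {i : ℕ} {p : ModuleMonomial} {a : ℕ} (ha : a ≤ pairDegree i p) :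
    pairDegree i (redistribute i p a) = pairDegree i p := by
  rw [pairDegree, exponent_redistribute_self, exponent_redistribute_apply, if_pos rfl]
  omega

theorem redistribute_redistribute {i : ℕ} {p : ModuleMonomial} {a : ℕ} (ha : a ≤ pairDegree i p)
    (b : ℕ) : redistribute i (redistribute i p a) b = redistribute i p b := by
  ext l
  · rfl
  · simp only [exponent_redistribute_apply, pairDegree_redistribute ha]
    split_ifs <;> rfl

theorem degree_exponent_redistribute {i : ℕ} {p : ModuleMonomial} {a : ℕ}
    (ha : a ≤ pairDegree i p) :
    (redistribute i p a).exponent.degree = p.exponent.degree := by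
  have hdeg : ∀ b ≤ pairDegree i p, (redistribute i p b).exponent.degree =
      ((p.exponent.erase i).erase (i + 1)).degree + pairDegree i p := by
    intro b hb
    simp only [redistribute, map_add, Finsupp.degree_single]
    omega
  rw [hdeg a ha, ← hdeg _ (exponent_le_pairDegree i p), redistribute_self]

theorem redistribute_mem_degreePart {S : Finset ℕ} {d i : ℕ} (hi : i ∈ S) (hi' : i + 1 ∈ S)
    {p : ModuleMonomial} (hp : p ∈ degreePart S d) {a : ℕ} (ha : a ≤ pairDegree i p) :
    redistribute i p a ∈ degreePart S d := by
  refine ⟨fun l hl => ?_, (degree_exponent_redistribute ha).trans hp.2⟩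
  rw [exponent_redistribute_apply, if_neg, if_neg, hp.1 l hl]
  · exact fun h => hl (h ▸ hi)
  · exact fun h => hl (h ▸ hi')

theorem pairDegree_mulVar {i l : ℕ} (hl : l = i ∨ l = i + 1) (q : ModuleMonomial) :
    pairDegree i (mulVar l q) = pairDegree i q + 1 := by
  simp only [pairDegree, exponent_mulVar_apply]
  split_ifs <;> omega

theorem pairDegree_mulVar_of_ne {i l : ℕ} (hi : l ≠ i) (hi' : l ≠ i + 1) (q : ModuleMonomial) :
    pairDegree i (mulVar l q) = pairDegree i q := by
  simp [pairDegree, hi, hi']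

theorem redistribute_mulVar_of_le {i l a : ℕ} (hl : l = i ∨ l = i + 1) {q : ModuleMonomial}
    (ha : a ≤ pairDegree i q) :
    redistribute i (mulVar l q) a = mulVar (i + 1) (redistribute i q a) := by
  ext m
  · rfl
  · simp only [exponent_redistribute_apply, exponent_mulVar_apply, pairDegree_mulVar hl]
    split_ifs <;> omega

theorem redistribute_mulVar_succ {i l : ℕ} (hl : l = i ∨ l = i + 1) (q : ModuleMonomial) (a : ℕ) :
    redistribute i (mulVar l q) (a + 1) = mulVar i (redistribute i q a) := by
  ext m
  · rfl
  · simp only [exponent_redistribute_apply, exponent_mulVar_apply, pairDegree_mulVar hl]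
    split_ifs <;> omega

theorem redistribute_mulVar_of_ne {i l : ℕ} (hi : l ≠ i) (hi' : l ≠ i + 1) (q : ModuleMonomial)
    (a : ℕ) : redistribute i (mulVar l q) a = mulVar l (redistribute i q a) := by
  ext m
  · rfl
  · simp only [exponent_redistribute_apply, exponent_mulVar_apply,
      pairDegree_mulVar_of_ne hi hi']
    split_ifs <;> omega

open scoped Classical in
/-- The exponents of `x_i` among the members of `A` that agree with `p` away from
`x_i, x_{i+1}`. -/
noncomputable def fibreExponents (i : ℕ) (A : Finset ModuleMonomial) (p : ModuleMonomial) :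
    Finset ℕ :=
  (Finset.range (pairDegree i p + 1)).filter fun a => redistribute i p a ∈ A

theorem mem_fibreExponents {i : ℕ} {A : Finset ModuleMonomial} {p : ModuleMonomial} {a : ℕ} :
    a ∈ fibreExponents i A p ↔ a ≤ pairDegree i p ∧ redistribute i p a ∈ A := by
  rw [fibreExponents, Finset.mem_filter, Finset.mem_range_succ_iff]

theorem card_fibreExponents_le (i : ℕ) (A : Finset ModuleMonomial) (p : ModuleMonomial) :
    (fibreExponents i A p).card ≤ pairDegree i p + 1 :=
  (Finset.card_filter_le _ _).trans_eq (Finset.card_range _)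

theorem fibreExponents_redistribute {i : ℕ} (A : Finset ModuleMonomial) {p : ModuleMonomial}
    {a : ℕ} (ha : a ≤ pairDegree i p) :
    fibreExponents i A (redistribute i p a) = fibreExponents i A p := by
  ext b
  rw [mem_fibreExponents, mem_fibreExponents, pairDegree_redistribute ha,
    redistribute_redistribute ha]

/-- Push each fibre of `A` down to the same number of monomials with the least possible
exponents of `x_i`. -/
noncomputable def compress (i : ℕ) (A : Finset ModuleMonomial) : Finset ModuleMonomial :=
  A.biUnion fun p => (Finset.range (fibreExponents i A p).card).image (redistribute i p)

theorem mem_compress {i : ℕ} {A : Finset ModuleMonomial} {p : ModuleMonomial} :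
    p ∈ compress i A ↔ p.exponent i < (fibreExponents i A p).card := by
  simp only [compress, Finset.mem_biUnion, Finset.mem_image, Finset.mem_range]
  constructor
  · rintro ⟨q, -, a, ha, rfl⟩
    have haq : a ≤ pairDegree i q :=
      Nat.le_of_lt_succ (ha.trans_le (card_fibreExponents_le i A q))
    rwa [exponent_redistribute_self, fibreExponents_redistribute A haq]
  · intro hp
    obtain ⟨a, ha⟩ := Finset.card_pos.1 (hp.trans_le' (Nat.zero_le _))
    obtain ⟨hap, haA⟩ := mem_fibreExponents.1 ha
    refine ⟨redistribute i p a, haA, p.exponent i, ?_, ?_⟩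
    · rwa [fibreExponents_redistribute A hap]
    · rw [redistribute_redistribute hap, redistribute_self]

theorem exists_mem_redistribute_eq_of_mem_compress {i : ℕ} {A : Finset ModuleMonomial}
    {p : ModuleMonomial} (hp : p ∈ compress i A) :
    ∃ q ∈ A, ∃ a ≤ pairDegree i q, redistribute i q a = p := by
  simp only [compress, Finset.mem_biUnion, Finset.mem_image, Finset.mem_range] at hp
  obtain ⟨q, hq, a, ha, hqa⟩ := hp
  exact ⟨q, hq, a, Nat.le_of_lt_succ (ha.trans_le (card_fibreExponents_le i A q)), hqa⟩

theorem compress_subset_degreePart {S : Finset ℕ} {d i : ℕ} (hi : i ∈ S) (hi' : i + 1 ∈ S)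
    {A : Finset ModuleMonomial} (hA : ↑A ⊆ degreePart S d) :
    ↑(compress i A) ⊆ degreePart S d := by
  intro p hp
  obtain ⟨q, hq, a, ha, rfl⟩ := exists_mem_redistribute_eq_of_mem_compress hp
  exact redistribute_mem_degreePart hi hi' (hA hq) ha

theorem fibreExponents_compress (i : ℕ) (A : Finset ModuleMonomial) (p : ModuleMonomial) :
    fibreExponents i (compress i A) p = Finset.range (fibreExponents i A p).card := by
  ext a
  have hcard := card_fibreExponents_le i A p
  rw [mem_fibreExponents, mem_compress, exponent_redistribute_self, Finset.mem_range]
  constructor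
  · rintro ⟨ha, hlt⟩
    rwa [fibreExponents_redistribute A ha] at hlt
  · intro hlt
    have ha : a ≤ pairDegree i p := by omega
    exact ⟨ha, by rwa [fibreExponents_redistribute A ha]⟩

theorem sum_eq_sum_fibreExponents {i : ℕ} {A T : Finset ModuleMonomial}
    (hT : ∀ y ∈ T, y.exponent i = 0) (hAT : ∀ p ∈ A, redistribute i p 0 ∈ T)
    (g : ModuleMonomial → ℕ) :
    ∑ p ∈ A, g p = ∑ y ∈ T, ∑ a ∈ fibreExponents i A y, g (redistribute i y a) := by
  rw [← Finset.sum_fiberwise_of_maps_to hAT]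
  refine Finset.sum_congr rfl fun y hy => Eq.symm ?_
  refine Finset.sum_nbij' (redistribute i y) (fun p => p.exponent i) ?_ ?_ ?_ ?_ fun _ _ => rfl
  · intro a ha
    obtain ⟨ha, haA⟩ := mem_fibreExponents.1 ha
    rw [Finset.mem_filter, redistribute_redistribute ha, ← hT y hy, redistribute_self]
    exact ⟨haA, rfl⟩
  · intro p hp
    obtain ⟨hpA, rfl⟩ := Finset.mem_filter.1 hp
    rw [fibreExponents_redistribute A (Nat.zero_le _), mem_fibreExponents, redistribute_self]
    exact ⟨exponent_le_pairDegree i p, hpA⟩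
  · exact fun a _ => exponent_redistribute_self i y a
  · intro p hp
    obtain ⟨-, rfl⟩ := Finset.mem_filter.1 hp
    rw [redistribute_redistribute (Nat.zero_le _), redistribute_self]

theorem exists_fibre_representatives (i : ℕ) (A : Finset ModuleMonomial) :
    ∃ T : Finset ModuleMonomial, (∀ y ∈ T, y.exponent i = 0) ∧
      (∀ p ∈ A, redistribute i p 0 ∈ T) ∧ ∀ p ∈ compress i A, redistribute i p 0 ∈ T := by
  refine ⟨A.image (redistribute i · 0), ?_, fun p hp => Finset.mem_image_of_mem _ hp, ?_⟩
  · intro y hy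
    obtain ⟨p, -, rfl⟩ := Finset.mem_image.1 hy
    exact exponent_redistribute_self i p 0
  · intro p hp
    obtain ⟨q, hq, a, ha, rfl⟩ := exists_mem_redistribute_eq_of_mem_compress hp
    rw [redistribute_redistribute ha]
    exact Finset.mem_image_of_mem _ hq

theorem card_compress (i : ℕ) (A : Finset ModuleMonomial) : (compress i A).card = A.card := by
  obtain ⟨T, hT, hAT, hcAT⟩ := exists_fibre_representatives i A
  simp_rw [Finset.card_eq_sum_ones, sum_eq_sum_fibreExponents hT hAT,
    sum_eq_sum_fibreExponents hT hcAT, fibreExponents_compress, ← Finset.card_eq_sum_ones,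
    Finset.card_range]

/-- A weighted degree in which a factor `x_i`, `i < n`, counts one more than `x_{i+1}`, so that
compression lowers it. -/
noncomputable def shiftWeight (n : ℕ) (p : ModuleMonomial) : ℕ :=
  Finsupp.weight (fun l => n - l) p.exponent

theorem shiftWeight_redistribute {i n : ℕ} (hi : i < n) {p : ModuleMonomial} {a : ℕ}
    (ha : a ≤ pairDegree i p) :
    shiftWeight n (redistribute i p a) = shiftWeight n (redistribute i p 0) + a := by
  obtain ⟨m, rfl⟩ := Nat.exists_eq_add_of_lt hi
  obtain ⟨t, ht⟩ := Nat.exists_eq_add_of_le ha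
  simp only [shiftWeight, redistribute, map_add, Finsupp.weight_single, smul_eq_mul, ht,
    Nat.add_sub_cancel_left, show i + m + 1 - i = m + 1 by omega,
    show i + m + 1 - (i + 1) = m by omega]
  simp only [Nat.sub_zero, Nat.zero_mul, Nat.add_zero]
  ring

theorem sum_shiftWeight_fibre {i n : ℕ} (hi : i < n) (A : Finset ModuleMonomial)
    (p : ModuleMonomial) :
    ∑ a ∈ fibreExponents i A p, shiftWeight n (redistribute i p a) =
      (fibreExponents i A p).card * shiftWeight n (redistribute i p 0) +
        ∑ a ∈ fibreExponents i A p, a := by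
  rw [Finset.sum_congr rfl fun a ha =>
    shiftWeight_redistribute hi (mem_fibreExponents.1 ha).1, Finset.sum_add_distrib,
    Finset.sum_const, smul_eq_mul]

theorem fibreExponents_ne_range {i : ℕ} {A : Finset ModuleMonomial} {q : ModuleMonomial}
    (hq : mulVar i q ∈ A) (hq' : mulVar (i + 1) q ∉ A) (k : ℕ) :
    fibreExponents i A (mulVar i q) ≠ Finset.range k := by
  intro heq
  have hmem : q.exponent i + 1 ∈ fibreExponents i A (mulVar i q) := by
    rw [mem_fibreExponents, redistribute_mulVar_succ (Or.inl rfl), redistribute_self,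
      pairDegree_mulVar (Or.inl rfl)]
    exact ⟨Nat.succ_le_succ (exponent_le_pairDegree i q), hq⟩
  have hnotMem : q.exponent i ∉ fibreExponents i A (mulVar i q) := by
    rw [mem_fibreExponents,
      redistribute_mulVar_of_le (Or.inl rfl) (exponent_le_pairDegree i q), redistribute_self]
    exact fun h => hq' h.2
  rw [heq, Finset.mem_range] at hmem hnotMem
  omega

theorem sum_shiftWeight_compress_lt {i n : ℕ} (hi : i < n) {A : Finset ModuleMonomial}
    {q : ModuleMonomial} (hq : mulVar i q ∈ A) (hq' : mulVar (i + 1) q ∉ A) :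
    ∑ p ∈ compress i A, shiftWeight n p < ∑ p ∈ A, shiftWeight n p := by
  obtain ⟨T, hT, hAT, hcAT⟩ := exists_fibre_representatives i A
  simp_rw [sum_eq_sum_fibreExponents hT hAT, sum_eq_sum_fibreExponents hT hcAT,
    sum_shiftWeight_fibre hi, fibreExponents_compress, Finset.card_range]
  refine Finset.sum_lt_sum (fun y _ => Nat.add_le_add_left (sum_range_card_le_sum _) _)
    ⟨redistribute i (mulVar i q) 0, hAT _ hq, Nat.add_lt_add_left ?_ _⟩
  rw [fibreExponents_redistribute A (Nat.zero_le _)]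
  exact sum_range_card_lt_sum (fibreExponents_ne_range hq hq' _)

/-- `A` contains every quotient of a member of `A'` by one of the variables `x_i`, `i < n`: the
condition for `A'` and `A` to be the standard monomials of a module in consecutive degrees. -/
def DivisorClosed (n : ℕ) (A' A : Finset ModuleMonomial) : Prop :=
  ∀ i < n, ∀ q, mulVar i q ∈ A' → q ∈ A

theorem DivisorClosed.card_fibreExponents {n i l : ℕ} (hi : i + 1 < n)
    (hl : l = i ∨ l = i + 1) {A' A : Finset ModuleMonomial} (hA : DivisorClosed n A' A)
    (q : ModuleMonomial) :
    (fibreExponents i A' (mulVar l q)).card ≤ (fibreExponents i A q).card ∨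
      (fibreExponents i A q).card = pairDegree i q + 1 := by
  refine card_le_or_card_eq_of_pred_mem (fun a ha => (mem_fibreExponents.1 ha).1)
    (fun a ha haq => ?_) fun a ha => ?_
  · rw [mem_fibreExponents, redistribute_mulVar_of_le hl haq] at ha
    exact mem_fibreExponents.2 ⟨haq, hA _ hi _ ha.2⟩
  · rw [mem_fibreExponents, redistribute_mulVar_succ hl, pairDegree_mulVar hl] at ha
    exact mem_fibreExponents.2 ⟨Nat.le_of_succ_le_succ ha.1, hA _ (Nat.lt_of_succ_lt hi) _ ha.2⟩

theorem DivisorClosed.compress {n i : ℕ} (hi : i + 1 < n) {A' A : Finset ModuleMonomial}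
    (hA : DivisorClosed n A' A) : DivisorClosed n (compress i A') (compress i A) := by
  intro l hl q hq
  rw [mem_compress] at hq ⊢
  have hexp : q.exponent i ≤ (mulVar l q).exponent i := by simp
  by_cases hli : l = i ∨ l = i + 1
  · rcases hA.card_fibreExponents hi hli q with hle | hfull
    · omega
    · rw [hfull]
      exact Nat.lt_succ_of_le (exponent_le_pairDegree i q)
  · obtain ⟨hli, hli'⟩ := not_or.1 hli
    have hsub : fibreExponents i A' (mulVar l q) ⊆ fibreExponents i A q := fun a ha => by
      rw [mem_fibreExponents, pairDegree_mulVar_of_ne hli hli',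
        redistribute_mulVar_of_ne hli hli'] at ha
      exact mem_fibreExponents.2 ⟨ha.1, hA l hl _ ha.2⟩
    have := Finset.card_le_card hsub
    omega

theorem DivisorClosed.exists_isStable {n d : ℕ} {A' A : Finset ModuleMonomial}
    (hclosed : DivisorClosed n A' A) (hA' : ↑A' ⊆ degreePart (Finset.range n) d) :
    ∃ B' B : Finset ModuleMonomial, DivisorClosed n B' B ∧ IsStable n B' ∧
      ↑B' ⊆ degreePart (Finset.range n) d ∧ B'.card = A'.card ∧ B.card = A.card := by
  induction hw : ∑ p ∈ A', shiftWeight n p using Nat.strong_induction_on generalizing A' A with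
  | _ w ih =>
    by_cases hstable : IsStable n A'
    · exact ⟨A', A, hclosed, hstable, hA', rfl, rfl⟩
    · obtain ⟨i, hi, q, hq, hq'⟩ : ∃ i, i + 1 < n ∧ ∃ q, mulVar i q ∈ A' ∧
          mulVar (i + 1) q ∉ A' := by
        simpa only [IsStable, not_forall, exists_prop] using hstable
      have hi' := Nat.lt_of_succ_lt hi
      obtain ⟨B', B, hBclosed, hBstable, hB', hcard', hcard⟩ :=
        ih _ (hw ▸ sum_shiftWeight_compress_lt hi' hq hq') (hclosed.compress hi)
          (compress_subset_degreePart (Finset.mem_range.2 hi') (Finset.mem_range.2 hi) hA') rfl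
      exact ⟨B', B, hBclosed, hBstable, hB', hcard'.trans (card_compress i A'),
        hcard.trans (card_compress i A)⟩

end Compression

section Growth

open scoped Classical in
/-- The multiples `x_j w` of the members `w` of `L` by a variable `x_j`, `j ∈ S`, not preceding any
variable of `w`. For an initial segment `L` these are all the monomials whose quotients by variables
lie in `L`, and each of them arises exactly once. -/
noncomputable def growth (S : Finset ℕ) (L : Finset ModuleMonomial) : Finset ModuleMonomial :=
  (L.sigma fun w => S.filter w.VarsLE).image fun x => mulVar x.2 x.1

theorem mem_growth {S : Finset ℕ} {L : Finset ModuleMonomial} {u : ModuleMonomial} :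
    u ∈ growth S L ↔ ∃ w ∈ L, ∃ j ∈ S, w.VarsLE j ∧ mulVar j w = u := by
  simp only [growth, Finset.mem_image, Finset.mem_sigma, Finset.mem_filter, Sigma.exists,
    and_assoc, exists_and_left]

theorem VarsLE.le_of_mulVar_eq_mulVar {w v : ModuleMonomial} {i j : ℕ} (hw : w.VarsLE j)
    (h : mulVar j w = mulVar i v) : i ≤ j := by
  by_contra! hlt
  simpa [hw i hlt, hlt.ne] using congrArg (fun p => p.exponent i) h

open scoped Classical in
theorem card_growth (S : Finset ℕ) (L : Finset ModuleMonomial) :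
    (growth S L).card = ∑ w ∈ L, (S.filter w.VarsLE).card := by
  rw [growth, Finset.card_image_of_injOn, Finset.card_sigma]
  rintro ⟨w, j⟩ h ⟨w', j'⟩ h' (heq : mulVar j w = mulVar j' w')
  have hw := (Finset.mem_filter.1 (Finset.mem_sigma.1 h).2).2
  have hw' := (Finset.mem_filter.1 (Finset.mem_sigma.1 h').2).2
  obtain rfl := (hw'.le_of_mulVar_eq_mulVar heq.symm).antisymm (hw.le_of_mulVar_eq_mulVar heq)
  rw [mulVar_injective j heq]

theorem growth_subset_degreePart {S : Finset ℕ} {d : ℕ} {L : Finset ModuleMonomial}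
    (hL : ↑L ⊆ degreePart S d) : ↑(growth S L) ⊆ degreePart S (d + 1) := by
  intro u hu
  obtain ⟨w, hw, j, hj, -, rfl⟩ := mem_growth.1 hu
  exact mulVar_mem_degreePart.2 ⟨hj, hL hw⟩

theorem exists_eq_mulVar_of_mem_degreePart_succ {S : Finset ℕ} {d : ℕ} {u : ModuleMonomial}
    (hu : u ∈ degreePart S (d + 1)) :
    ∃ j ∈ S, ∃ w ∈ degreePart S d, w.VarsLE j ∧ mulVar j w = u := by
  obtain ⟨j, w, rfl, hwj⟩ := exists_eq_mulVar_of_degree_ne_zero (hu.2.trans_ne d.succ_ne_zero)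
  obtain ⟨hj, hw⟩ := mulVar_mem_degreePart.1 hu
  exact ⟨j, hj, w, hw, hwj, rfl⟩

theorem _root_.IsInitialSegment.growth {S : Finset ℕ} {d : ℕ} {L : Finset ModuleMonomial}
    (hL : IsInitialSegment (degreePart S d) L) :
    IsInitialSegment (degreePart S (d + 1)) (growth S L) := by
  refine ⟨growth_subset_degreePart hL.1, fun y hy x hx hxy => ?_⟩
  obtain ⟨w, hw, j, -, hwj, rfl⟩ := mem_growth.1 hy
  obtain ⟨i, hi, v, hv, hvi, rfl⟩ := exists_eq_mulVar_of_mem_degreePart_succ hx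
  refine mem_growth.2 ⟨v, hL.mem_of_le hw hv (le_of_not_gt fun hwv => hxy.not_ge ?_), i, hi, hvi,
    rfl⟩
  exact mulVar_le_mulVar_of_lt hwj ((hL.1 hw).2.trans hv.2.symm) hwv i

theorem _root_.IsInitialSegment.divisorClosed_growth {n d : ℕ} {L : Finset ModuleMonomial}
    (hL : IsInitialSegment (degreePart (Finset.range n) d) L) :
    DivisorClosed n (ModuleMonomial.growth (Finset.range n) L) L := by
  intro i _ v hv
  obtain ⟨w, hw, j, -, hwj, heq⟩ := mem_growth.1 hv
  have hvn := (mulVar_mem_degreePart.1 (growth_subset_degreePart hL.1 hv)).2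
  refine hL.mem_of_le hw hvn (le_of_not_gt fun hwv => ?_)
  refine (mulVar_strictMono i hwv).not_ge ?_
  exact heq ▸ mulVar_le_mulVar_left (hwj.le_of_mulVar_eq_mulVar heq) w

theorem _root_.IsInitialSegment.subset_growth {k d : ℕ} {L L' : Finset ModuleMonomial}
    (hL' : IsInitialSegment (degreePart (Finset.range (k + 1)) (d + 1)) L')
    (hsub : divVar k L' ⊆ L) : L' ⊆ ModuleMonomial.growth (Finset.range (k + 1)) L := by
  intro u hu
  obtain ⟨j, hj, w, hw, hwj, rfl⟩ := exists_eq_mulVar_of_mem_degreePart_succ (hL'.1 hu)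
  refine mem_growth.2 ⟨w, hsub (mem_divVar.2 ?_), j, hj, hwj, rfl⟩
  exact hL'.mem_of_le hu (mulVar_mem_degreePart.2 ⟨Finset.self_mem_range_succ k, hw⟩)
    (mulVar_le_mulVar_left (Finset.mem_range_succ_iff.1 hj) w)

theorem DivisorClosed.card_le_card_growth {k d : ℕ} {A' A L : Finset ModuleMonomial}
    (hclosed : DivisorClosed (k + 1) A' A)
    (hA' : ↑A' ⊆ degreePart (Finset.range (k + 1)) (d + 1))
    (hL : IsInitialSegment (degreePart (Finset.range (k + 1)) d) L) (hcard : L.card = A.card) :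
    A'.card ≤ (growth (Finset.range (k + 1)) L).card := by
  obtain ⟨B', B, hBclosed, hBstable, hB', hBcard', hBcard⟩ := hclosed.exists_isStable hA'
  obtain ⟨L', hL', hLcard'⟩ :=
    exists_isInitialSegment_degreePart (Nat.le_add_left 1 k) (d + 1) B'.card
  have hgreen := greenBound k (d + 1) B' L' hB' hBstable hL' hLcard'
  have hdivB : (divVar k B').card ≤ B.card :=
    Finset.card_le_card fun q hq => hBclosed k k.lt_succ_self q (mem_divVar.1 hq)
  have hsplitB := card_withoutVar_add_card_divVar k B'
  have hsplitL := card_withoutVar_add_card_divVar k L'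
  have hdivL : divVar k L' ⊆ L :=
    (hL'.divVar (Finset.self_mem_range_succ k)).subset_of_card_le hL (by omega)
  rw [← hBcard', ← hLcard']
  exact Finset.card_le_card (hL'.subset_growth hdivL)

theorem growth_monomials {C S T : Finset ℕ} {d : ℕ} (hTS : T ⊆ S)
    (h : ∀ j ∈ S, ∀ w ∈ degreePart T d, w.VarsLE j → j ∈ T) :
    growth S (monomials C T d) = monomials C T (d + 1) := by
  ext u
  simp only [mem_growth, mem_monomials]
  constructor
  · rintro ⟨w, ⟨hwC, hw⟩, j, hj, hwj, rfl⟩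
    exact ⟨hwC, mulVar_mem_degreePart.2 ⟨h j hj w hw hwj, hw⟩⟩
  · rintro ⟨huC, hu⟩
    obtain ⟨j, hj, w, hw, hwj, rfl⟩ := exists_eq_mulVar_of_mem_degreePart_succ hu
    exact ⟨w, ⟨huC, hw⟩, j, hTS hj, hwj, rfl⟩

theorem growth_monomials_Ico (C : Finset ℕ) {lo a : ℕ} (hlo : lo ≤ a) (n d : ℕ) :
    growth (Finset.Ico lo n) (monomials C (Finset.Ico a n) (d + 1)) =
      monomials C (Finset.Ico a n) (d + 2) := by
  refine growth_monomials (Finset.Ico_subset_Ico_left hlo) fun j hj w hw hwj => ?_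
  obtain ⟨l, hl, v, -, -, rfl⟩ := exists_eq_mulVar_of_mem_degreePart_succ hw
  have hlj : l ≤ j := by
    by_contra! hjl
    simpa using hwj l hjl
  rw [Finset.mem_Ico] at hl hj ⊢
  omega

theorem growth_monomials_self (C S : Finset ℕ) (d : ℕ) :
    growth S (monomials C S d) = monomials C S (d + 1) :=
  growth_monomials subset_rfl fun _ hj _ _ _ => hj

theorem card_growth_union {S : Finset ℕ} {L L' : Finset ModuleMonomial}
    (h : Disjoint L L') :
    (growth S (L ∪ L')).card = (growth S L).card + (growth S L').card := by
  simp only [card_growth, Finset.sum_union h]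

theorem varsLE_mulVar {a j : ℕ} {w : ModuleMonomial} :
    (mulVar a w).VarsLE j ↔ a ≤ j ∧ w.VarsLE j := by
  constructor
  · intro h
    refine ⟨le_of_not_gt fun hja => ?_, fun i hi => ?_⟩
    · simpa using h a hja
    · exact Nat.le_zero.1 ((Nat.le_add_right _ _).trans_eq
        ((exponent_mulVar_apply a i w).symm.trans (h i hi)))
  · rintro ⟨haj, hw⟩ i hi
    simp [hw i hi, (haj.trans_lt hi).ne]

theorem card_growth_map_mulVar {lo a : ℕ} (hlo : lo ≤ a) (n : ℕ) (Y : Finset ModuleMonomial) :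
    (growth (Finset.Ico lo n) (Y.map ⟨mulVar a, mulVar_injective a⟩)).card =
      (growth (Finset.Ico a n) Y).card := by
  classical
  rw [card_growth, card_growth, Finset.sum_map]
  refine Finset.sum_congr rfl fun w _ => congrArg Finset.card ?_
  ext j
  simp only [Function.Embedding.coeFn_mk, Finset.mem_filter, Finset.mem_Ico, varsLE_mulVar]
  refine ⟨fun h => ⟨⟨h.2.1, h.1.2⟩, h.2.2⟩, fun h => ⟨⟨hlo.trans h.1.1, h.1.2⟩, h.1.1, h.2⟩⟩

end Growth

section Expansion

/-- The part `Σ_{i=s}^d C(m_i, i)` of a binomial expansion has admissible coefficients: they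
increase strictly, start with `m_s ≥ s` and stay below `N`. -/
def IsCascade (N s d : ℕ) (m : ℕ → ℕ) : Prop :=
  s ≤ d → m d < N ∧ (∀ i, s ≤ i → i < d → m i < m (i + 1)) ∧ s ≤ m s

theorem IsCascade.of_succ {N s d : ℕ} {m : ℕ → ℕ} (h : IsCascade N s (d + 1) m) :
    IsCascade (m (d + 1)) s d m := by
  intro hsd
  obtain ⟨-, hlt, hs⟩ := h (hsd.trans d.le_succ)
  exact ⟨hlt d hsd d.lt_succ_self, fun i hi hid => hlt i hi (hid.trans d.lt_succ_self), hs⟩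

theorem IsCascade.le_apply {N s d : ℕ} {m : ℕ → ℕ} (h : IsCascade N s d m) (hsd : s ≤ d) :
    d ≤ m d := by
  obtain ⟨-, hlt, hs⟩ := h hsd
  suffices ∀ i, s ≤ i → i ≤ d → i ≤ m i from this d hsd le_rfl
  intro i hi
  induction i, hi using Nat.le_induction with
  | base => exact fun _ => hs
  | succ i hi ih => exact fun hid => (ih (Nat.le_of_lt hid)).trans_lt (hlt i hi hid)

theorem IsCascade.congr {N s d : ℕ} {m m' : ℕ → ℕ} (h : IsCascade N s d m)
    (heq : ∀ i ≤ d, m' i = m i) : IsCascade N s d m' := by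
  intro hsd
  obtain ⟨hN, hlt, hs⟩ := h hsd
  refine ⟨(heq d le_rfl).trans_lt hN, fun i hi hid => ?_, hs.trans_eq (heq s hsd).symm⟩
  rw [heq i hid.le, heq (i + 1) hid]
  exact hlt i hi hid

theorem IsCascade.succ {N s d : ℕ} {m : ℕ → ℕ} (h : IsCascade (m (d + 1)) s d m)
    (hN : m (d + 1) < N) (hd : d + 1 ≤ m (d + 1)) : IsCascade N s (d + 1) m := by
  intro hs
  refine ⟨hN, fun i hi hid => ?_, ?_⟩
  · rcases (Nat.le_of_lt_succ hid).eq_or_lt with rfl | hlt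
    · exact (h hi).1
    · exact (h (hi.trans hlt.le)).2.1 i hi hlt
  · rcases hs.eq_or_lt with rfl | hlt
    · exact hd
    · exact (h (Nat.le_of_lt_succ hlt)).2.2

theorem exists_choose_le_lt_choose_succ {d b : ℕ} : ∀ {N : ℕ}, b < N.choose (d + 1) →
    ∃ k < N, k.choose (d + 1) ≤ b ∧ b < (k + 1).choose (d + 1)
  | 0, hb => absurd hb (Nat.not_lt_zero b)
  | N + 1, hb => by
    rcases lt_or_ge b (N.choose (d + 1)) with hlt | hge
    · obtain ⟨k, hk, hkb⟩ := exists_choose_le_lt_choose_succ hlt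
      exact ⟨k, hk.trans N.lt_succ_self, hkb⟩
    · exact ⟨N, N.lt_succ_self, hge, hb⟩

theorem sum_choose_update (s d k : ℕ) (m : ℕ → ℕ) :
    ∑ i ∈ Finset.Icc s d, (Function.update m (d + 1) k i).choose i =
      ∑ i ∈ Finset.Icc s d, (m i).choose i :=
  Finset.sum_congr rfl fun i hi => by
    rw [Function.update_of_ne (Nat.lt_succ_of_le (Finset.mem_Icc.1 hi).2).ne]

theorem exists_isCascade {d N b : ℕ} (hb : b < N.choose d) :
    ∃ (s : ℕ) (m : ℕ → ℕ), 1 ≤ s ∧ s ≤ d + 1 ∧ (∀ i < s, m i = 0) ∧ (∀ i, d < i → m i = 0) ∧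
      IsCascade N s d m ∧ b = ∑ i ∈ Finset.Icc s d, (m i).choose i := by
  induction d generalizing N b with
  | zero =>
    rw [Nat.choose_zero_right, Nat.lt_one_iff] at hb
    exact ⟨1, 0, le_rfl, le_rfl, fun _ _ => rfl, fun _ _ => rfl, fun h => by omega, by simp [hb]⟩
  | succ d ih =>
    obtain ⟨k, hkN, hkb, hbk⟩ := exists_choose_le_lt_choose_succ hb
    by_cases hdk : d + 1 ≤ k
    · rw [Nat.choose_succ_succ', add_comm] at hbk
      obtain ⟨s, m, hs, hsd, hlow, hhigh, hm, hsum⟩ := ih (Nat.sub_lt_left_of_lt_add hkb hbk)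
      have hupd : ∀ i ≤ d, Function.update m (d + 1) k i = m i := fun i hi =>
        Function.update_of_ne (Nat.lt_succ_of_le hi).ne _ _
      refine ⟨s, Function.update m (d + 1) k, hs, hsd.trans (Nat.le_succ _), fun i hi => ?_,
        fun i hi => ?_, ?_, ?_⟩
      · rw [Function.update_of_ne (by omega), hlow i hi]
      · rw [Function.update_of_ne (by omega), hhigh i (by omega)]
      · exact IsCascade.succ (by simpa using hm.congr hupd) (by simpa using hkN)
          (by simpa using hdk)
      · rw [Finset.sum_Icc_succ_top hsd, sum_choose_update, Function.update_self]
        omega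
    · have hb0 : b = 0 := by
        have hle := Nat.choose_le_choose (d + 1) (Nat.lt_of_not_le hdk)
        exact Nat.lt_one_iff.1 (hbk.trans_le (hle.trans_eq (Nat.choose_self _)))
      exact ⟨d + 2, 0, by omega, le_rfl, fun _ _ => rfl, fun _ _ => rfl, fun h => by omega,
        by simp [hb0]⟩

theorem exists_isBinomialExpansion {n d : ℕ} (hn : 1 ≤ n) (b : ℕ) :
    ∃ sm : ℕ × (ℕ → ℕ), IsBinomialExpansion n d b sm.1 sm.2 := by
  have hpos : 0 < (n - 1 + d).choose d := Nat.choose_pos (Nat.le_add_left d _)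
  obtain ⟨s, m, hs, hsd, hlow, hhigh, hm, hsum⟩ := exists_isCascade (Nat.mod_lt b hpos)
  have hupd : ∀ i ≤ d, Function.update m (d + 1) (b / (n - 1 + d).choose d) i = m i :=
    fun i hi => Function.update_of_ne (Nat.lt_succ_of_le hi).ne _ _
  refine ⟨⟨s, Function.update m (d + 1) (b / (n - 1 + d).choose d)⟩, hs, hsd, fun i hi => ?_,
    fun i hi => ?_, fun h => ?_, ?_⟩
  · exact (hupd i (by omega)).trans (hlow i hi)
  · exact (Function.update_of_ne hi.ne' _ _).trans (hhigh i (Nat.lt_of_succ_lt hi))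
  · obtain ⟨hN, hlt⟩ := hm.congr hupd h
    refine ⟨?_, hlt⟩
    dsimp only
    omega
  · simp only [Function.update_self, sum_choose_update, ← hsum]
    exact (Nat.div_add_mod' _ _).symm

theorem mem_degreePart_Ico_iff {lo a : ℕ} (hlo : lo ≤ a) {n d : ℕ} {p : ModuleMonomial} :
    p ∈ degreePart (Finset.Ico a n) d ↔
      p ∈ degreePart (Finset.Ico lo n) d ∧ ∀ i < a, p.exponent i = 0 := by
  simp only [degreePart, Set.mem_ofPred_eq, Finset.mem_Ico]
  refine ⟨fun h => ⟨⟨fun i hi => h.1 i (by omega), h.2⟩, fun i hi => h.1 i (by omega)⟩,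
    fun h => ⟨fun i hi => ?_, h.1.2⟩⟩
  by_cases hia : i < a
  · exact h.2 i hia
  · exact h.1.1 i (by omega)

theorem isInitialSegment_monomials_Ico {lo a : ℕ} (hlo : lo ≤ a) (q n d : ℕ) :
    IsInitialSegment (monomials {q} (Finset.Ico lo n) d : Set ModuleMonomial)
      (monomials {q} (Finset.Ico a n) d) := by
  simp only [IsInitialSegment, Finset.coe_subset, Finset.subset_iff, Finset.mem_coe,
    mem_monomials, Finset.mem_singleton, mem_degreePart_Ico_iff hlo]
  refine ⟨fun _ hy => ⟨hy.1, hy.2.1⟩, ?_⟩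
  rintro y ⟨hyq, -, hya⟩ x ⟨hxq, hx⟩ hxy
  refine ⟨hxq, hx, fun l hl => ?_⟩
  obtain hcomp | ⟨-, i, heq, hlt⟩ := lt_iff.1 hxy
  · exact absurd hcomp (hxq.trans hyq.symm).not_lt
  rcases lt_or_ge l i with hli | hil
  · rw [heq l hli, hya l hl]
  · exact absurd hlt (by simp [hya i (hil.trans_lt hl)])

theorem _root_.IsInitialSegment.monomials_union_map_mulVar {q a n d : ℕ} (han : a < n)
    {Y : Finset ModuleMonomial}
    (hY : IsInitialSegment (monomials {q} (Finset.Ico a n) d : Set ModuleMonomial) Y) :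
    IsInitialSegment (monomials {q} (Finset.Ico a n) (d + 1) : Set ModuleMonomial)
      (monomials {q} (Finset.Ico (a + 1) n) (d + 1) ∪ Y.map ⟨mulVar a, mulVar_injective a⟩) := by
  have hvar := isInitialSegment_monomials_Ico a.le_succ q n (d + 1)
  have ha : a ∈ Finset.Ico a n := Finset.mem_Ico.2 ⟨le_rfl, han⟩
  have hmul {p : ModuleMonomial} : mulVar a p ∈ monomials {q} (Finset.Ico a n) (d + 1) ↔
      p ∈ monomials {q} (Finset.Ico a n) d := by
    simp [mem_monomials, mulVar_mem_degreePart, han]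
  refine ⟨fun p hp => ?_, fun y hy x hx hxy => ?_⟩
  · rcases Finset.mem_union.1 hp with hp | hp
    · exact hvar.1 hp
    · obtain ⟨y, hy, rfl⟩ := Finset.mem_map.1 hp
      exact hmul.2 (hY.1 hy)
  · rcases Finset.mem_union.1 hy with hy | hy
    · exact Finset.mem_union_left _ (hvar.2 y hy x hx hxy)
    obtain ⟨z, hz, rfl⟩ := Finset.mem_map.1 hy
    by_cases hxa : x.exponent a = 0
    · obtain ⟨hxq, hx⟩ := mem_monomials.1 hx
      refine Finset.mem_union_left _ (mem_monomials.2 ⟨hxq, ?_⟩)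
      refine (mem_degreePart_Ico_iff a.le_succ).2 ⟨hx, fun i hi => ?_⟩
      rcases (Nat.le_of_lt_succ hi).eq_or_lt with rfl | hlt
      · exact hxa
      · exact ((mem_degreePart_Ico_iff le_rfl).1 hx).2 i hlt
    · obtain ⟨w, rfl⟩ := exists_eq_mulVar hxa
      exact Finset.mem_union_right _ <| Finset.mem_map_of_mem _ <|
        hY.2 z hz w (hmul.1 hx) ((mulVar_strictMono a).lt_iff_lt.1 hxy)

theorem disjoint_monomials_map_mulVar (q a n d : ℕ) (Y : Finset ModuleMonomial) :
    Disjoint (monomials {q} (Finset.Ico (a + 1) n) d) (Y.map ⟨mulVar a, mulVar_injective a⟩) := by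
  refine Finset.disjoint_left.2 fun p hp hp' => ?_
  obtain ⟨y, -, rfl⟩ := Finset.mem_map.1 hp'
  simpa using (mem_monomials.1 hp).2.1 a (by simp)

theorem exists_isInitialSegment_card_eq_sum_choose (q n s : ℕ) (m : ℕ → ℕ) (hs : 1 ≤ s)
    (d : ℕ) : ∀ N lo, N + lo + 1 = n + d → IsCascade N s d m →
    ∃ Y, IsInitialSegment (monomials {q} (Finset.Ico lo n) d : Set ModuleMonomial) Y ∧
      Y.card = ∑ i ∈ Finset.Icc s d, (m i).choose i ∧
      (growth (Finset.Ico lo n) Y).card = ∑ i ∈ Finset.Icc s d, (m i + 1).choose (i + 1) := by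
  induction d with
  | zero =>
    intro N lo _ _
    exact ⟨∅, ⟨by simp, by simp⟩, by simp [Finset.Icc_eq_empty_of_lt (Nat.lt_of_succ_le hs)],
      by simp [card_growth, Finset.Icc_eq_empty_of_lt (Nat.lt_of_succ_le hs)]⟩
  | succ d ih =>
    intro N lo hN hm
    rcases lt_or_ge (d + 1) s with hds | hsd
    · exact ⟨∅, ⟨by simp, by simp⟩, by simp [Finset.Icc_eq_empty_of_lt hds],
        by simp [card_growth, Finset.Icc_eq_empty_of_lt hds]⟩
    obtain ⟨t, ht⟩ := Nat.exists_eq_add_of_le (d.le_succ.trans (hm.le_apply hsd))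
    obtain ⟨hmN, -⟩ := hm hsd
    -- `a` is chosen such that `n - (a + 1)` variables have `C(m (d + 1), d + 1)` monomials.
    obtain ⟨a, rfl⟩ : ∃ a, n = a + 1 + t := ⟨n - (1 + t), by omega⟩
    have hlo : lo ≤ a := by omega
    obtain ⟨Y, hY, hcard, hgrowth⟩ := ih (m (d + 1)) a (by omega) hm.of_succ
    have hdisj := disjoint_monomials_map_mulVar q a (a + 1 + t) (d + 1) Y
    refine ⟨_, (hY.monomials_union_map_mulVar (by omega)).trans
      (isInitialSegment_monomials_Ico hlo q _ _) rfl, ?_, ?_⟩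
    · rw [Finset.card_union_of_disjoint hdisj, Finset.card_map, card_monomials, hcard,
        Finset.sum_Icc_succ_top hsd, Nat.multichoose_eq, Nat.card_Ico, ht, Finset.card_singleton,
        show a + 1 + t - (a + 1) + (d + 1) - 1 = d + t by omega, one_mul, add_comm]
    · rw [card_growth_union hdisj, growth_monomials_Ico _ (hlo.trans a.le_succ),
        card_growth_map_mulVar hlo, card_monomials, hgrowth, Finset.sum_Icc_succ_top hsd,
        Nat.multichoose_eq, Nat.card_Ico, ht, Finset.card_singleton,
        show a + 1 + t - (a + 1) + (d + 2) - 1 = d + t + 1 by omega, one_mul, add_comm]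

theorem _root_.IsInitialSegment.monomials_range_union {q d : ℕ} {S : Finset ℕ}
    {Y : Finset ModuleMonomial}
    (hY : IsInitialSegment (monomials {q} S d : Set ModuleMonomial) Y) :
    IsInitialSegment (degreePart S d) (monomials (Finset.range q) S d ∪ Y) := by
  have hrange := isInitialSegment_monomials_range q S d
  refine ⟨?_, fun y hy x hx hxy => ?_⟩
  · rw [Finset.coe_union]
    exact Set.union_subset hrange.1 (hY.1.trans (coe_monomials_subset_degreePart _ _ _))
  rcases Finset.mem_union.1 hy with hy | hy
  · exact Finset.mem_union_left _ (hrange.2 y hy x hx hxy)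
  obtain ⟨hyq, -⟩ := mem_monomials.1 (hY.1 hy)
  rw [Finset.mem_singleton] at hyq
  rcases lt_or_ge x.component q with hlt | hge
  · exact Finset.mem_union_left _ (mem_monomials.2 ⟨Finset.mem_range.2 hlt, hx⟩)
  · refine Finset.mem_union_right _ (hY.2 y hy x (mem_monomials.2 ⟨?_, hx⟩) hxy)
    rw [lt_iff] at hxy
    rw [Finset.mem_singleton]
    omega

theorem disjoint_monomials_range {q d : ℕ} {S : Finset ℕ} {Y : Finset ModuleMonomial}
    (hY : Y ⊆ monomials {q} S d) : Disjoint (monomials (Finset.range q) S d) Y := by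
  refine Finset.disjoint_left.2 fun p hp hp' => ?_
  have hlt := Finset.mem_range.1 (mem_monomials.1 hp).1
  exact hlt.ne (Finset.mem_singleton.1 (mem_monomials.1 (hY hp')).1)

theorem card_growth_of_isBinomialExpansion {n d s : ℕ} {m : ℕ → ℕ} {L : Finset ModuleMonomial}
    (hn : 1 ≤ n) (hL : IsInitialSegment (degreePart (Finset.range n) d) L)
    (hm : IsBinomialExpansion n d L.card s m) :
    (growth (Finset.range n) L).card = m (d + 1) * (n + d).choose (d + 1) +
      ∑ i ∈ Finset.Icc s d, (m i + 1).choose (i + 1) := by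
  obtain ⟨hs, -, -, -, hcascade, hcard⟩ := hm
  obtain ⟨Y, hY, hYcard, hYgrowth⟩ := exists_isInitialSegment_card_eq_sum_choose (m (d + 1)) n s m
    hs d (n - 1 + d) 0 (by omega) fun h => ⟨by have := (hcascade h).1; omega, (hcascade h).2⟩
  rw [← Finset.range_eq_Ico] at hY hYgrowth
  have hdisj := disjoint_monomials_range hY.1
  have hLY : L = monomials (Finset.range (m (d + 1))) (Finset.range n) d ∪ Y := by
    refine hL.eq_of_card_eq hY.monomials_range_union ?_
    rw [Finset.card_union_of_disjoint hdisj, card_monomials, hYcard, hcard, Nat.multichoose_eq,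
      Finset.card_range, Finset.card_range, Nat.sub_add_comm hn]
  rw [hLY, card_growth_union hdisj, growth_monomials_self, card_monomials, hYgrowth,
    Nat.multichoose_eq, Finset.card_range, Finset.card_range]
  rfl

theorem card_growth_of_subset_degreePart_zero {S : Finset ℕ} {L : Finset ModuleMonomial}
    (hL : ↑L ⊆ degreePart S 0) : (growth S L).card = S.card * L.card := by
  classical
  rw [card_growth, Finset.sum_const_nat fun w hw => ?_, mul_comm]
  refine congrArg Finset.card (Finset.filter_true_of_mem fun j _ i _ => ?_)
  rw [(Finsupp.degree_eq_zero_iff _).1 (hL hw).2, Finsupp.zero_apply]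

theorem card_growth_eq_macaulayPow {n d : ℕ} {L : Finset ModuleMonomial} (hn : 1 ≤ n)
    (hL : IsInitialSegment (degreePart (Finset.range n) d) L) :
    (growth (Finset.range n) L).card = macaulayPow n d L.card := by
  unfold macaulayPow
  split_ifs with hcard hd hm
  · simp [card_growth, Finset.card_eq_zero.1 hcard]
  · subst hd
    rw [card_growth_of_subset_degreePart_zero hL.1, Finset.card_range]
  · exact card_growth_of_isBinomialExpansion hn hL hm.choose_spec
  · exact absurd (exists_isBinomialExpansion hn L.card) hm

theorem DivisorClosed.card_le_macaulayPow {n d : ℕ} (hn : 1 ≤ n) {A' A : Finset ModuleMonomial}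
    (hclosed : DivisorClosed n A' A) (hA' : ↑A' ⊆ degreePart (Finset.range n) (d + 1)) :
    A'.card ≤ macaulayPow n d A.card := by
  obtain ⟨L, hL, hcard⟩ := exists_isInitialSegment_degreePart hn d A.card
  obtain ⟨k, rfl⟩ := Nat.exists_eq_add_of_le' hn
  rw [← hcard, ← card_growth_eq_macaulayPow hn hL]
  exact hclosed.card_le_card_growth hA' hL hcard

theorem exists_divisorClosed_card_eq {n : ℕ} (hn : 1 ≤ n) {h : ℕ → ℕ}
    (hh : ∀ j, h (j + 1) ≤ macaulayPow n j (h j)) :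
    ∃ L : ℕ → Finset ModuleMonomial,
      (∀ j, L j ⊆ monomials (Finset.range (h 0)) (Finset.range n) j) ∧
      (∀ j, (L j).card = h j) ∧ ∀ j, DivisorClosed n (L (j + 1)) (L j) := by
  choose L hL hcard using fun j => exists_isInitialSegment_degreePart hn j (h j)
  have hgrowth (j : ℕ) : L (j + 1) ⊆ growth (Finset.range n) (L j) := by
    refine (hL (j + 1)).subset_of_card_le (hL j).growth ?_
    rw [card_growth_eq_macaulayPow hn (hL j), hcard, hcard]
    exact hh j
  refine ⟨L, fun j => ?_, hcard,
    fun j i hi q hq => (hL j).divisorClosed_growth i hi q (hgrowth j hq)⟩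
  induction j with
  | zero =>
    refine (hL 0).subset_of_card_le (isInitialSegment_monomials_range _ _ _) ?_
    simp [hcard, card_monomials]
  | succ j ih =>
    intro u hu
    obtain ⟨w, hw, i, -, -, rfl⟩ := mem_growth.1 (hgrowth j hu)
    exact mem_monomials.2 ⟨(mem_monomials.1 (ih hw)).1, (hL (j + 1)).1 hu⟩

end Expansion

end ModuleMonomial

section LinearIndependence

variable {K M ι : Type*} [DivisionRing K] [AddCommGroup M] [Module K M]

theorem finrank_span_image_of_linearIndepOn {v : ι → M} {s : Finset ι}
    (hs : LinearIndepOn K v (s : Set ι)) :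
    Module.finrank K (Submodule.span K (v '' (s : Set ι))) = s.card := by
  rw [Set.image_eq_range]
  exact (finrank_span_eq_card hs.linearIndependent).trans (Fintype.card_coe s)

theorem iSupIndep_span_image {κ : Type*} {v : ι → M} {s : κ → Set ι}
    (hs : Pairwise fun i j => Disjoint (s i) (s j)) (hv : LinearIndepOn K v (⋃ j, s j)) :
    iSupIndep fun j => Submodule.span K (v '' s j) := by
  intro j
  have hdisj : Disjoint (s j) (⋃ (i) (_ : i ≠ j), s i) :=
    Set.disjoint_iUnion₂_right.2 fun i hij => hs hij.symm
  have hunion : LinearIndepOn K v (s j ∪ ⋃ (i) (_ : i ≠ j), s i) :=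
    hv.mono (Set.union_subset (Set.subset_iUnion s j)
      (Set.iUnion₂_subset fun i _ => Set.subset_iUnion s i))
  refine ((linearIndepOn_union_iff hdisj).1 hunion).2.2.mono_right (iSup₂_le fun i hij => ?_)
  exact Submodule.span_mono (Set.image_mono (Set.subset_iUnion₂_of_subset i hij subset_rfl))

variable [LinearOrder ι]

variable (K) in
open scoped Classical in
/-- The indices in `s` whose vector does not depend linearly on the vectors of smaller index. -/
noncomputable def pivots (v : ι → M) (s : Finset ι) : Finset ι :=
  s.filter fun p => v p ∉ Submodule.span K (v '' {q | q ∈ s ∧ q < p})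

theorem mem_pivots {v : ι → M} {s : Finset ι} {p : ι} :
    p ∈ pivots K v s ↔ p ∈ s ∧ v p ∉ Submodule.span K (v '' {q | q ∈ s ∧ q < p}) := by
  classical exact Finset.mem_filter

theorem mem_pivots_insert {v : ι → M} {s : Finset ι} {a p : ι} (ha : ∀ x ∈ s, x < a) :
    p ∈ pivots K v (insert a s) ↔
      p = a ∧ v a ∉ Submodule.span K (v '' s) ∨ p ∈ pivots K v s := by
  have hlast : {q | q ∈ insert a s ∧ q < a} = (s : Set ι) := by
    ext q
    simp only [Finset.mem_insert, Set.mem_ofPred_eq, Finset.mem_coe]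
    exact ⟨fun hq => hq.1.resolve_left hq.2.ne, fun hq => ⟨Or.inr hq, ha q hq⟩⟩
  rw [mem_pivots, mem_pivots, Finset.mem_insert, or_and_right]
  refine or_congr (and_congr_right ?_) (and_congr_right fun hp => ?_)
  · rintro rfl
    rw [hlast]
  · have hset : {q | q ∈ insert a s ∧ q < p} = {q | q ∈ s ∧ q < p} := by
      ext q
      simp only [Finset.mem_insert, Set.mem_ofPred_eq]
      refine and_congr_left fun hq => or_iff_right ?_
      rintro rfl
      exact lt_asymm hq (ha p hp)
    rw [hset]

theorem linearIndepOn_pivots_and_span_eq (v : ι → M) (s : Finset ι) :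
    LinearIndepOn K v (pivots K v s : Set ι) ∧
      Submodule.span K (v '' pivots K v s) = Submodule.span K (v '' s) := by
  induction s using Finset.induction_on_max with
  | empty => simp [pivots]
  | insert a s ha ih =>
    obtain ⟨hindep, hspan⟩ := ih
    rw [Finset.coe_insert, Set.image_insert_eq]
    by_cases hva : v a ∈ Submodule.span K (v '' s)
    · have hpivots : pivots K v (insert a s) = pivots K v s := by
        ext p
        simp [mem_pivots_insert ha, hva]
      rw [hpivots, Submodule.span_insert_eq_span hva]
      exact ⟨hindep, hspan⟩
    · have hpivots : (pivots K v (insert a s) : Set ι) = insert a ↑(pivots K v s) := by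
        ext p
        simp [mem_pivots_insert ha, hva]
      rw [hpivots, Set.image_insert_eq, Submodule.span_insert, Submodule.span_insert, hspan]
      exact ⟨hindep.insert (hspan ▸ hva), rfl⟩

theorem card_pivots (v : ι → M) (s : Finset ι) :
    (pivots K v s).card = Module.finrank K (Submodule.span K (v '' (s : Set ι))) := by
  obtain ⟨hindep, hspan⟩ := linearIndepOn_pivots_and_span_eq (K := K) v s
  rw [← hspan, finrank_span_image_of_linearIndepOn hindep]

end LinearIndependence

theorem exists_nat_generators {R M : Type*} [Semiring R] [AddCommMonoid M] [Module R M]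
    [Module.Finite R M] {s : Set M} (hzero : 0 ∈ s) (hs : Submodule.span R s = ⊤) :
    ∃ (r : ℕ) (e : ℕ → M), (∀ c, e c ∈ s) ∧ Submodule.span R (e '' Set.Iio r) = ⊤ := by
  obtain ⟨t, hts, hspan⟩ := (Submodule.fg_span_iff_fg_span_finset_subset s).1
    (hs ▸ Module.Finite.fg_top (R := R))
  refine ⟨t.card, fun c => if hc : c < t.card then t.equivFin.symm ⟨c, hc⟩ else 0,
    fun c => ?_, ?_⟩
  · dsimp only
    split_ifs
    · exact hts (Subtype.property _)
    · exact hzero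
  · rw [← top_le_iff, ← hs, hspan]
    refine Submodule.span_mono fun x hx => ?_
    exact ⟨t.equivFin ⟨x, hx⟩, Fin.is_lt _, by simp⟩

namespace ModuleMonomial

section Eval

variable {K M : Type*} [CommSemiring K] {n : ℕ} [AddCommMonoid M]
  [Module (MvPolynomial (Fin n) K) M]

variable (n) in
/-- The exponent of `p` restricted to the variables `x_0, …, x_{n-1}`. -/
noncomputable def finExponent (p : ModuleMonomial) : Fin n →₀ ℕ :=
  p.exponent.comapDomain Fin.val Fin.val_injective.injOn

theorem finExponent_mulVar (i : Fin n) (p : ModuleMonomial) :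
    (mulVar i p).finExponent n = Finsupp.single i 1 + p.finExponent n := by
  ext j
  simp [finExponent, exponent_mulVar_apply, Finsupp.single_apply, Fin.ext_iff, add_comm]

variable (K n) in
/-- The element `x^a e_c` of a module with chosen elements `e_0, e_1, …`, for the monomial with
exponent `a` and component `c`. -/
noncomputable def eval (e : ℕ → M) (p : ModuleMonomial) : M :=
  MvPolynomial.monomial (p.finExponent n) (1 : K) • e p.component

theorem eval_mulVar (e : ℕ → M) (i : Fin n) (p : ModuleMonomial) :
    eval K n e (mulVar i p) = (MvPolynomial.X i : MvPolynomial (Fin n) K) • eval K n e p := by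
  rw [eval, eval, finExponent_mulVar, smul_smul, MvPolynomial.X, MvPolynomial.monomial_mul,
    component_mulVar, mul_one]

theorem eval_of_exponent_eq_zero (e : ℕ → M) (c : ℕ) : eval K n e ⟨c, 0⟩ = e c := by
  have hexp : finExponent n ⟨c, 0⟩ = 0 := Finsupp.ext fun _ => rfl
  rw [eval, hexp, MvPolynomial.monomial_zero', MvPolynomial.C_1, one_smul]

theorem mapsTo_mulVar_monomials (C : Finset ℕ) (i : Fin n) (j : ℕ) :
    Set.MapsTo (mulVar i) (monomials C (Finset.range n) j : Set ModuleMonomial)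
      (monomials C (Finset.range n) (j + 1)) := fun p hp => by
  obtain ⟨hcomp, hp⟩ := mem_monomials.1 hp
  exact mem_monomials.2 ⟨hcomp, mulVar_mem_degreePart.2 ⟨Finset.mem_range.2 i.2, hp⟩⟩

variable [Module K M]

variable (K n) in
/-- The degree `j` part of the graded module generated by `e_0, …, e_{r-1}` in degree zero. -/
def gradedSpan (e : ℕ → M) (r j : ℕ) : Submodule K M :=
  Submodule.span K (eval K n e '' monomials (Finset.range r) (Finset.range n) j)

theorem mem_gradedSpan_zero (e : ℕ → M) {r c : ℕ} (hc : c < r) : e c ∈ gradedSpan K n e r 0 :=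
  Submodule.subset_span ⟨⟨c, 0⟩,
    mem_monomials.2 ⟨Finset.mem_range.2 hc, fun _ _ => rfl, map_zero _⟩,
    eval_of_exponent_eq_zero e c⟩

theorem span_gradedSpan_zero {e : ℕ → M} {r : ℕ}
    (he : Submodule.span (MvPolynomial (Fin n) K) (e '' Set.Iio r) = ⊤) :
    Submodule.span (MvPolynomial (Fin n) K) (gradedSpan K n e r 0 : Set M) = ⊤ := by
  rw [← top_le_iff, ← he]
  refine Submodule.span_mono ?_
  rintro _ ⟨c, hc, rfl⟩
  exact mem_gradedSpan_zero e hc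

theorem gradedSpan_le {ℳ : ℕ → Submodule K M}
    (hsmul : ∀ (i j : ℕ) (p : MvPolynomial (Fin n) K),
      p ∈ MvPolynomial.homogeneousSubmodule (Fin n) K i → ∀ x ∈ ℳ j, p • x ∈ ℳ (i + j))
    {e : ℕ → M} (he : ∀ c, e c ∈ ℳ 0) (r j : ℕ) :
    gradedSpan K n e r j ≤ ℳ j := by
  refine Submodule.span_le.2 ?_
  rintro _ ⟨p, hp, rfl⟩
  have hpj := (mem_monomials.1 hp).2
  clear hp
  induction j generalizing p with
  | zero =>
    obtain ⟨c, a⟩ := p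
    obtain rfl : a = 0 := (Finsupp.degree_eq_zero_iff a).1 hpj.2
    rw [eval_of_exponent_eq_zero]
    exact he c
  | succ j ih =>
    obtain ⟨i, hi, q, hq, -, rfl⟩ := exists_eq_mulVar_of_mem_degreePart_succ hpj
    rw [eval_mulVar (i := ⟨i, Finset.mem_range.1 hi⟩), add_comm]
    exact hsmul 1 j _ (MvPolynomial.isHomogeneous_X K _) _ (ih q hq)

variable [IsScalarTower K (MvPolynomial (Fin n) K) M]

theorem X_smul_mem_span_eval (e : ℕ → M) (i : Fin n) {s t : Set ModuleMonomial}
    (hst : Set.MapsTo (mulVar i) s t) {x : M} (hx : x ∈ Submodule.span K (eval K n e '' s)) :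
    (MvPolynomial.X i : MvPolynomial (Fin n) K) • x ∈ Submodule.span K (eval K n e '' t) := by
  induction hx using Submodule.span_induction with
  | mem x hx =>
    obtain ⟨q, hq, rfl⟩ := hx
    rw [← eval_mulVar]
    exact Submodule.subset_span ⟨_, hst hq, rfl⟩
  | zero => rw [smul_zero]; exact zero_mem _
  | add x y _ _ hx hy => rw [smul_add]; exact add_mem hx hy
  | smul a x _ hx => rw [smul_comm]; exact Submodule.smul_mem _ a hx

theorem monomial_smul_mem_gradedSpan (e : ℕ → M) (r : ℕ) (m : Fin n →₀ ℕ) {j : ℕ} {x : M}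
    (hx : x ∈ gradedSpan K n e r j) :
    MvPolynomial.monomial m (1 : K) • x ∈ gradedSpan K n e r (m.degree + j) := by
  induction m using Finsupp.induction_linear generalizing j x with
  | zero => simpa using hx
  | add m m' hm hm' =>
    rw [← mul_one (1 : K), ← MvPolynomial.monomial_mul, mul_smul, map_add, add_assoc]
    exact hm (hm' hx)
  | single i k =>
    rw [← MvPolynomial.X_pow_eq_monomial, Finsupp.degree_single]
    induction k with
    | zero => simpa using hx
    | succ k ih =>
      rw [pow_succ', mul_smul, add_right_comm]
      exact X_smul_mem_span_eval e i (mapsTo_mulVar_monomials _ i _) ih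

theorem smul_mem_gradedSpan (e : ℕ → M) (r : ℕ) {i j : ℕ} {p : MvPolynomial (Fin n) K}
    (hp : p.IsHomogeneous i) {x : M} (hx : x ∈ gradedSpan K n e r j) :
    p • x ∈ gradedSpan K n e r (i + j) := by
  rw [MvPolynomial.as_sum p, Finset.sum_smul]
  refine sum_mem fun m hm => ?_
  have hdeg : m.degree = i := by
    by_contra hne
    exact MvPolynomial.mem_support_iff.1 hm (hp.coeff_eq_zero hne)
  rw [← mul_one (p.coeff m), ← smul_eq_mul, ← MvPolynomial.smul_monomial, smul_assoc, ← hdeg]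
  exact Submodule.smul_mem _ _ (monomial_smul_mem_gradedSpan e r m hx)

theorem smul_mem_iSup_gradedSpan (e : ℕ → M) (r : ℕ) (p : MvPolynomial (Fin n) K) {x : M}
    (hx : x ∈ ⨆ j, gradedSpan K n e r j) : p • x ∈ ⨆ j, gradedSpan K n e r j := by
  induction hx using Submodule.iSup_induction' with
  | mem j x hx =>
    rw [← MvPolynomial.sum_homogeneousComponent p, Finset.sum_smul]
    exact sum_mem fun i _ => Submodule.mem_iSup_of_mem (i + j) <|
      smul_mem_gradedSpan e r (MvPolynomial.homogeneousComponent_isHomogeneous i p) hx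
  | zero => rw [smul_zero]; exact zero_mem _
  | add x y _ _ hx hy => rw [smul_add]; exact add_mem hx hy

theorem iSup_gradedSpan_eq_top {e : ℕ → M} {r : ℕ}
    (he : Submodule.span (MvPolynomial (Fin n) K) (e '' Set.Iio r) = ⊤) :
    ⨆ j, gradedSpan K n e r j = ⊤ := by
  refine top_le_iff.1 fun x _ => ?_
  have hx : x ∈ Submodule.span (MvPolynomial (Fin n) K) (e '' Set.Iio r) := by
    rw [he]
    exact Submodule.mem_top
  induction hx using Submodule.span_induction with
  | mem x hx =>
    obtain ⟨c, hc, rfl⟩ := hx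
    exact Submodule.mem_iSup_of_mem 0 (mem_gradedSpan_zero e hc)
  | zero => exact zero_mem _
  | add x y _ _ hx hy => exact add_mem (hx trivial) (hy trivial)
  | smul p x _ hx => exact smul_mem_iSup_gradedSpan e r p (hx trivial)

end Eval

section GradedModule

variable {K M : Type*} [Field K] {n : ℕ} [AddCommGroup M] [Module K M]
  [Module (MvPolynomial (Fin n) K) M] [IsScalarTower K (MvPolynomial (Fin n) K) M]
  {ℳ : ℕ → Submodule K M}

theorem gradedSpan_eq (hindep : iSupIndep ℳ)
    (hsmul : ∀ (i j : ℕ) (p : MvPolynomial (Fin n) K),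
      p ∈ MvPolynomial.homogeneousSubmodule (Fin n) K i → ∀ x ∈ ℳ j, p • x ∈ ℳ (i + j))
    {e : ℕ → M} (he : ∀ c, e c ∈ ℳ 0) {r : ℕ}
    (hspan : Submodule.span (MvPolynomial (Fin n) K) (e '' Set.Iio r) = ⊤) :
    gradedSpan K n e r = ℳ :=
  (hindep.le_iff_eq_of_iSup_eq_top (iSup_gradedSpan_eq_top hspan)).1 (gradedSpan_le hsmul he r)

theorem divisorClosed_pivots (e : ℕ → M) (r j : ℕ) :
    DivisorClosed n
      (pivots K (eval K n e) (monomials (Finset.range r) (Finset.range n) (j + 1)))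
      (pivots K (eval K n e) (monomials (Finset.range r) (Finset.range n) j)) := by
  intro i hi q hq
  obtain ⟨hqj, hnotMem⟩ := mem_pivots.1 hq
  obtain ⟨hcomp, hdeg⟩ := mem_monomials.1 hqj
  refine mem_pivots.2
    ⟨mem_monomials.2 ⟨hcomp, (mulVar_mem_degreePart.1 hdeg).2⟩, fun hmem => hnotMem ?_⟩
  rw [eval_mulVar (i := ⟨i, hi⟩)]
  refine X_smul_mem_span_eval e ⟨i, hi⟩ (fun p hp => ?_) hmem
  exact ⟨mapsTo_mulVar_monomials _ ⟨i, hi⟩ j hp.1, mulVar_strictMono i hp.2⟩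

theorem finrank_gradedSpan_succ_le (hn : 1 ≤ n) (e : ℕ → M) (r j : ℕ) :
    Module.finrank K (gradedSpan K n e r (j + 1)) ≤
      macaulayPow n j (Module.finrank K (gradedSpan K n e r j)) := by
  rw [gradedSpan, gradedSpan, ← card_pivots, ← card_pivots]
  exact (divisorClosed_pivots e r j).card_le_macaulayPow hn fun p hp =>
    (mem_monomials.1 (mem_pivots.1 hp).1).2

theorem finrank_succ_le_macaulayPow (hn : 1 ≤ n) (hinternal : DirectSum.IsInternal ℳ)
    (hsmul : ∀ (i j : ℕ) (p : MvPolynomial (Fin n) K),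
      p ∈ MvPolynomial.homogeneousSubmodule (Fin n) K i → ∀ x ∈ ℳ j, p • x ∈ ℳ (i + j))
    [Module.Finite (MvPolynomial (Fin n) K) M]
    (hgen : Submodule.span (MvPolynomial (Fin n) K) (ℳ 0 : Set M) = ⊤) (j : ℕ) :
    Module.finrank K (ℳ (j + 1)) ≤ macaulayPow n j (Module.finrank K (ℳ j)) := by
  obtain ⟨r, e, he, hspan⟩ := exists_nat_generators (zero_mem (ℳ 0)) hgen
  rw [← gradedSpan_eq hinternal.submodule_iSupIndep hsmul he hspan]
  exact finrank_gradedSpan_succ_le hn e r j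

end GradedModule

section MonomialQuotient

variable {n r : ℕ}

theorem finExponent_injOn :
    Set.InjOn (fun p : ModuleMonomial => (p.component, p.finExponent n))
      {p | ∀ i ∉ Finset.range n, p.exponent i = 0} := by
  rintro ⟨c, a⟩ ha ⟨c', a'⟩ ha' heq
  obtain ⟨rfl, hexp⟩ := Prod.mk.inj heq
  refine congrArg _ (Finsupp.ext fun i => ?_)
  by_cases hi : i < n
  · exact DFunLike.congr_fun hexp ⟨i, hi⟩
  · rw [ha i (mt Finset.mem_range.1 hi), ha' i (mt Finset.mem_range.1 hi)]

variable (K : Type*) [CommRing K]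

/-- The `c`-th standard basis vector of `S^r`, or zero if `r ≤ c`. -/
noncomputable def basisVector (n r c : ℕ) : Fin r → MvPolynomial (Fin n) K :=
  fun k => if c = k then 1 else 0

theorem coeff_eval_basisVector {p q : ModuleMonomial} {k : Fin r} (hk : p.component = k)
    (hp : ∀ i ∉ Finset.range n, p.exponent i = 0) (hq : ∀ i ∉ Finset.range n, q.exponent i = 0) :
    (eval K n (basisVector K n r) q k).coeff (p.finExponent n) = if p = q then 1 else 0 := by
  have hiff : p = q ↔ q.component = k ∧ q.finExponent n = p.finExponent n := by
    rw [← hk, ← Prod.mk.injEq]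
    exact ⟨fun h => h ▸ rfl, fun h => (finExponent_injOn hq hp h).symm⟩
  simp only [hiff, eval, basisVector, Pi.smul_apply, smul_eq_mul, mul_ite, mul_one, mul_zero,
    ite_and]
  split_ifs <;> simp_all [MvPolynomial.coeff_monomial]

theorem sum_smul_basisVector (f : Fin r → MvPolynomial (Fin n) K) :
    ∑ k, f k • basisVector K n r k = f := by
  ext1 l
  simp [basisVector, Finset.sum_apply, Fin.val_inj]

/-- The submodule of `S^r` whose elements have no monomial in `B`. If the complement of `B` is
closed under multiplication by variables, then the monomials in `B` are a basis of the quotient. -/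
noncomputable def monomialRelations (n r : ℕ) (B : Set ModuleMonomial)
    (hB : ∀ i < n, ∀ q, mulVar i q ∈ B → q ∈ B) :
    Submodule (MvPolynomial (Fin n) K) (Fin r → MvPolynomial (Fin n) K) where
  carrier := {f | ∀ p ∈ B, ∀ k : Fin r, p.component = k → (f k).coeff (p.finExponent n) = 0}
  add_mem' hf hg p hp k hk := by
    rw [Pi.add_apply, MvPolynomial.coeff_add, hf p hp k hk, hg p hp k hk, add_zero]
  zero_mem' _ _ _ _ := MvPolynomial.coeff_zero _
  smul_mem' a := by
    induction a using MvPolynomial.induction_on with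
    | C a =>
      intro f hf p hp k hk
      rw [Pi.smul_apply, smul_eq_mul, MvPolynomial.coeff_C_mul, hf p hp k hk, mul_zero]
    | add a b ha hb =>
      intro f hf p hp k hk
      rw [add_smul, Pi.add_apply, MvPolynomial.coeff_add, ha hf p hp k hk, hb hf p hp k hk,
        add_zero]
    | mul_X a i ha =>
      intro f hf
      rw [mul_smul]
      refine ha fun p hp k hk => ?_
      rw [Pi.smul_apply, smul_eq_mul, mul_comm, MvPolynomial.coeff_mul_X']
      split_ifs with hi
      · have hpi : p.finExponent n i ≠ 0 := Finsupp.mem_support_iff.1 hi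
        obtain ⟨q, rfl⟩ := exists_eq_mulVar (i := i) (p := p) hpi
        rw [finExponent_mulVar, add_tsub_cancel_left]
        exact hf q (hB i i.2 q hp) k hk
      · rfl

variable {K} {B : Set ModuleMonomial} {hB : ∀ i < n, ∀ q, mulVar i q ∈ B → q ∈ B}

theorem mem_monomialRelations {f : Fin r → MvPolynomial (Fin n) K} :
    f ∈ monomialRelations K n r B hB ↔
      ∀ p ∈ B, ∀ k : Fin r, p.component = k → (f k).coeff (p.finExponent n) = 0 :=
  Iff.rfl

variable (K) (hB) in
/-- The class of the `c`-th basis vector in `S^r` modulo the monomial relations. -/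
noncomputable def quotientBasisVector (c : ℕ) :
    (Fin r → MvPolynomial (Fin n) K) ⧸ monomialRelations K n r B hB :=
  (monomialRelations K n r B hB).mkQ (basisVector K n r c)

theorem eval_quotientBasisVector (p : ModuleMonomial) :
    eval K n (quotientBasisVector K (r := r) hB) p =
      (monomialRelations K n r B hB).mkQ (eval K n (basisVector K n r) p) := by
  rw [eval, eval, quotientBasisVector, map_smul]

theorem eval_quotientBasisVector_eq_zero
    (hvars : ∀ p ∈ B, ∀ i ∉ Finset.range n, p.exponent i = 0) {p : ModuleMonomial}
    (hp : ∀ i ∉ Finset.range n, p.exponent i = 0) (hpB : p ∉ B) :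
    eval K n (quotientBasisVector K (r := r) hB) p = 0 := by
  rw [eval_quotientBasisVector, Submodule.mkQ_apply, Submodule.Quotient.mk_eq_zero,
    mem_monomialRelations]
  intro q hq k hk
  rw [coeff_eval_basisVector K hk (hvars q hq) hp, if_neg]
  rintro rfl
  exact hpB hq

theorem linearIndepOn_eval_quotientBasisVector
    (hvars : ∀ p ∈ B, ∀ i ∉ Finset.range n, p.exponent i = 0) (hcomp : ∀ p ∈ B, p.component < r) :
    LinearIndepOn K (eval K n (quotientBasisVector K (r := r) hB)) B := by
  rw [LinearIndepOn, linearIndependent_iff']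
  intro s g hsum p hps
  have hmem : ∑ q ∈ s, g q • eval K n (basisVector K n r) q ∈ monomialRelations K n r B hB := by
    rw [← Submodule.Quotient.mk_eq_zero, ← Submodule.mkQ_apply, map_sum, ← hsum]
    refine Finset.sum_congr rfl fun q _ => ?_
    rw [eval_quotientBasisVector]
    rfl
  have hcoeff := mem_monomialRelations.1 hmem p p.2 ⟨p.1.component, hcomp p p.2⟩ rfl
  simp only [Finset.sum_apply, MvPolynomial.coeff_sum, Pi.smul_apply, MvPolynomial.coeff_smul]
    at hcoeff
  rw [Finset.sum_eq_single_of_mem p hps] at hcoeff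
  · rwa [coeff_eval_basisVector K rfl (hvars p p.2) (hvars p p.2), if_pos rfl, smul_eq_mul,
      mul_one] at hcoeff
  · intro q _ hqp
    rw [coeff_eval_basisVector K rfl (hvars p p.2) (hvars q q.2),
      if_neg fun h => hqp (Subtype.ext h.symm), smul_zero]

theorem span_quotientBasisVector :
    Submodule.span (MvPolynomial (Fin n) K)
      (quotientBasisVector K (r := r) hB '' Set.Iio r) = ⊤ := by
  refine top_le_iff.1 fun x _ => ?_
  obtain ⟨f, rfl⟩ := Submodule.mkQ_surjective _ x
  rw [← sum_smul_basisVector K f, map_sum]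
  refine sum_mem fun k _ => ?_
  rw [map_smul]
  exact Submodule.smul_mem _ _ (Submodule.subset_span ⟨k, k.2, rfl⟩)

end MonomialQuotient

section Realization

variable {K : Type*} [Field K] {n r : ℕ} {L : ℕ → Finset ModuleMonomial}

theorem mem_iUnion_iff_mem_degree (hL : ∀ j, L j ⊆ monomials (Finset.range r) (Finset.range n) j)
    {p : ModuleMonomial} : p ∈ ⋃ j, (L j : Set ModuleMonomial) ↔ p ∈ L p.exponent.degree := by
  refine ⟨fun hp => ?_, fun hp => Set.mem_iUnion.2 ⟨_, hp⟩⟩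
  obtain ⟨j, hj⟩ := Set.mem_iUnion.1 hp
  rwa [(mem_monomials.1 (hL j hj)).2.2]

theorem mem_iUnion_of_mulVar_mem
    (hL : ∀ j, L j ⊆ monomials (Finset.range r) (Finset.range n) j)
    (hclosed : ∀ j, DivisorClosed n (L (j + 1)) (L j)) :
    ∀ i < n, ∀ q, mulVar i q ∈ ⋃ j, (L j : Set ModuleMonomial) →
      q ∈ ⋃ j, (L j : Set ModuleMonomial) := by
  intro i hi q hq
  rw [mem_iUnion_iff_mem_degree hL, degree_exponent_mulVar] at hq
  exact (mem_iUnion_iff_mem_degree hL).2 (hclosed _ i hi q hq)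

variable {hB : ∀ i < n, ∀ q, mulVar i q ∈ ⋃ j, (L j : Set ModuleMonomial) →
  q ∈ ⋃ j, (L j : Set ModuleMonomial)}

theorem gradedSpan_quotientBasisVector
    (hL : ∀ j, L j ⊆ monomials (Finset.range r) (Finset.range n) j) (j : ℕ) :
    gradedSpan K n (quotientBasisVector K (r := r) hB) r j =
      Submodule.span K (eval K n (quotientBasisVector K (r := r) hB) '' L j) := by
  refine le_antisymm (Submodule.span_le.2 ?_) (Submodule.span_mono (Set.image_mono (hL j)))
  rintro _ ⟨p, hp, rfl⟩
  by_cases hpL : p ∈ L j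
  · exact Submodule.subset_span ⟨p, hpL, rfl⟩
  obtain ⟨-, hvars, hdeg⟩ := mem_monomials.1 hp
  rw [SetLike.mem_coe, eval_quotientBasisVector_eq_zero (fun q hq => ?_) hvars]
  · exact zero_mem _
  · rwa [mem_iUnion_iff_mem_degree hL, hdeg]
  · exact (mem_monomials.1 (hL _ ((mem_iUnion_iff_mem_degree hL).1 hq))).2.1

theorem linearIndepOn_iUnion
    (hL : ∀ j, L j ⊆ monomials (Finset.range r) (Finset.range n) j) :
    LinearIndepOn K (eval K n (quotientBasisVector K (r := r) hB))
      (⋃ j, (L j : Set ModuleMonomial)) := by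
  have hmem {p : ModuleMonomial} (hp : p ∈ ⋃ j, (L j : Set ModuleMonomial)) :=
    mem_monomials.1 (hL _ ((mem_iUnion_iff_mem_degree hL).1 hp))
  exact linearIndepOn_eval_quotientBasisVector (fun p hp => (hmem hp).2.1)
    fun p hp => Finset.mem_range.1 (hmem hp).1

theorem isInternal_gradedSpan_quotientBasisVector
    (hL : ∀ j, L j ⊆ monomials (Finset.range r) (Finset.range n) j) :
    DirectSum.IsInternal (gradedSpan K n (quotientBasisVector K (r := r) hB) r) := by
  refine (DirectSum.isInternal_submodule_iff_iSupIndep_and_iSup_eq_top _).2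
    ⟨?_, iSup_gradedSpan_eq_top span_quotientBasisVector⟩
  rw [funext (gradedSpan_quotientBasisVector hL)]
  refine iSupIndep_span_image (fun i j hij => ?_) (linearIndepOn_iUnion hL)
  refine Set.disjoint_left.2 fun p hi hj => hij ?_
  exact (mem_monomials.1 (hL i hi)).2.2.symm.trans (mem_monomials.1 (hL j hj)).2.2

theorem finrank_gradedSpan_quotientBasisVector
    (hL : ∀ j, L j ⊆ monomials (Finset.range r) (Finset.range n) j) (j : ℕ) :
    Module.finrank K (gradedSpan K n (quotientBasisVector K (r := r) hB) r j) =
      (L j).card := by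
  rw [gradedSpan_quotientBasisVector hL]
  exact finrank_span_image_of_linearIndepOn <|
    (linearIndepOn_iUnion hL).mono (Set.subset_iUnion (fun j => (L j : Set ModuleMonomial)) j)

end Realization

end ModuleMonomial

theorem hilbert_function_of_module_generated_in_degree_zero_iff_general.{u}
    (K : Type u) [Field K] (n : ℕ) (hn : 1 ≤ n) (h : ℕ → ℕ) :
    (∃ (M : Type u) (_ : AddCommGroup M) (_ : Module K M)
        (_ : Module (MvPolynomial (Fin n) K) M)
        (_ : IsScalarTower K (MvPolynomial (Fin n) K) M)
        (ℳ : ℕ → Submodule K M),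
      DirectSum.IsInternal ℳ ∧
      (∀ (i j : ℕ) (p : MvPolynomial (Fin n) K),
          p ∈ MvPolynomial.homogeneousSubmodule (Fin n) K i →
            ∀ x ∈ ℳ j, p • x ∈ ℳ (i + j)) ∧
      Module.Finite (MvPolynomial (Fin n) K) M ∧
      Submodule.span (MvPolynomial (Fin n) K) ((ℳ 0 : Submodule K M) : Set M) = ⊤ ∧
      (∀ j : ℕ, Module.finrank K (ℳ j) = h j)) ↔
    (∀ j : ℕ, h (j + 1) ≤ macaulayPow n j (h j)) := by
  constructor
  · rintro ⟨M, _, _, _, _, ℳ, hinternal, hsmul, _, hgen, hfinrank⟩ j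
    rw [← hfinrank, ← hfinrank]
    exact ModuleMonomial.finrank_succ_le_macaulayPow hn hinternal hsmul hgen j
  · intro hgrowth
    obtain ⟨L, hL, hcard, hclosed⟩ := ModuleMonomial.exists_divisorClosed_card_eq hn hgrowth
    have hB := ModuleMonomial.mem_iUnion_of_mulVar_mem hL hclosed
    refine ⟨(Fin (h 0) → MvPolynomial (Fin n) K) ⧸
        ModuleMonomial.monomialRelations K n (h 0) (⋃ j, (L j : Set ModuleMonomial)) hB,
      inferInstance, inferInstance, inferInstance, inferInstance,
      ModuleMonomial.gradedSpan K n (ModuleMonomial.quotientBasisVector K hB) (h 0),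
      ModuleMonomial.isInternal_gradedSpan_quotientBasisVector hL,
      fun i j p hp x hx => ModuleMonomial.smul_mem_gradedSpan _ _ hp hx, inferInstance,
      ModuleMonomial.span_gradedSpan_zero ModuleMonomial.span_quotientBasisVector,
      fun j => ?_⟩
    rw [ModuleMonomial.finrank_gradedSpan_quotientBasisVector hL, hcard]

/-- Hulett / Blancafort–Elias: a numerical function `h : ℕ → ℕ` is
the Hilbert function of a finitely generated ℕ-graded module over
`S = K[x_1,…,x_n]` generated in degree zero if and only if
`h(j+1) ≤ h(j)^{⟨j⟩}` for all `j ≥ 0`. -/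
theorem hilbert_function_of_module_generated_in_degree_zero_iff
    (K : Type) [Field K] (n : ℕ) (hn : 1 ≤ n) (h : ℕ → ℕ) :
    (∃ (M : Type) (_ : AddCommGroup M) (_ : Module K M)
        (_ : Module (MvPolynomial (Fin n) K) M)
        (_ : IsScalarTower K (MvPolynomial (Fin n) K) M)
        (ℳ : ℕ → Submodule K M),
      DirectSum.IsInternal ℳ ∧
      (∀ (i j : ℕ) (p : MvPolynomial (Fin n) K),
          p ∈ MvPolynomial.homogeneousSubmodule (Fin n) K i →
            ∀ x ∈ ℳ j, p • x ∈ ℳ (i + j)) ∧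
      Module.Finite (MvPolynomial (Fin n) K) M ∧
      Submodule.span (MvPolynomial (Fin n) K) ((ℳ 0 : Submodule K M) : Set M) = ⊤ ∧
      (∀ j : ℕ, Module.finrank K (ℳ j) = h j)) ↔
    (∀ j : ℕ, h (j + 1) ≤ macaulayPow n j (h j)) :=
  hilbert_function_of_module_generated_in_degree_zero_iff_general K n hn h
end
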